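/- Let W_{n+1} be a spherical Whittaker function on GL_{n+1}(F) with respect to character ψ (W_{n+1}(ug) = ψ(u)W_{n+1}(g) for u upper unipotent, W_{n+1} right GL_{n+1}(𝒪)-invariant). Define W̃(h) = Σ_{η ∈ 𝒩_{n+1}} (1-ℓ)^{s(η)} W_{n+1}(ι(h)η) for h ∈ GL_n(F), where 𝒩_{n+1} = φ⁻¹N_{n+1}(𝒪)φ/N_{n+1}(𝒪) with φ = diag(ϖ⁻¹,…,ϖ^{-(n+1)}), and s(η) counts the indices i with η_{i,i+1} ∈ 𝒪. Then W̃ is supported on N_n(F)·GL_n(𝒪), and for k ∈ GL_n(𝒪), W̃(k) = (-1)ⁿ ℓ^{n(n+1)(n+2)/6} W_{n+1}(1) if v(k_{ij}) > i-j for all i > j, and W̃(k) = 0 otherwise. -/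

import Mathlib

open Matrix

namespace Stmt12

variable {F : Type*} [Field F]

/-- `g ∈ GL_m(O)`: the entries of `g` and of `g⁻¹` lie in `O`. -/
def InGLO (O : Subring F) {m : ℕ} (g : GL (Fin m) F) : Prop :=
  (∀ i j, (g : Matrix (Fin m) (Fin m) F) i j ∈ O) ∧
  (∀ i j, ((g⁻¹ : GL (Fin m) F) : Matrix (Fin m) (Fin m) F) i j ∈ O)

/-- `η ∈ φ⁻¹ N_m(O) φ`, i.e. `η` is upper-triangular unipotent with
`ϖ^{j-i} η_{ij} ∈ O` for `i < j` (where `φ = diag(ϖ⁻¹,…,ϖ^{-m})`). -/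
def InConjN (O : Subring F) (ϖ : F) {m : ℕ} (η : GL (Fin m) F) : Prop :=
  (∀ i, (η : Matrix (Fin m) (Fin m) F) i i = 1) ∧
  (∀ i j, j < i → (η : Matrix (Fin m) (Fin m) F) i j = 0) ∧
  (∀ i j : Fin m, i < j →
    ϖ ^ ((j : ℕ) - (i : ℕ)) * (η : Matrix (Fin m) (Fin m) F) i j ∈ O)

/-- `ν ∈ N_m(O)`: upper-triangular unipotent with entries in `O`. -/
def InNO (O : Subring F) {m : ℕ} (ν : GL (Fin m) F) : Prop :=
  (∀ i, (ν : Matrix (Fin m) (Fin m) F) i i = 1) ∧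
  (∀ i j, j < i → (ν : Matrix (Fin m) (Fin m) F) i j = 0) ∧
  (∀ i j : Fin m, i < j → (ν : Matrix (Fin m) (Fin m) F) i j ∈ O)

/-- `s(η)`: the number of integral entries on the superdiagonal of `η`. -/
noncomputable def sInt (O : Subring F) {m : ℕ} (η : GL (Fin (m + 1)) F) : ℕ :=
  Nat.card {i : Fin m //
    (η : Matrix (Fin (m + 1)) (Fin (m + 1)) F) i.castSucc i.succ ∈ O}

/-!
Write `J = φ⁻¹ I φ`, where `I` consists of the integral matrices that are upper triangular
unipotent modulo `ϖ`. Character sums over the residue field `k` expand the weight: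
`(1 - ℓ) ^ s(η) = (-1) ^ n ∑ₐ χₐ(η)` with `a ∈ (kˣ) ^ n` and `χₐ(g) = ψ(∑ᵢ aᵢ g_{i,i+1})`, where `a`
is lifted to `O`. As `χₐ` is a character of `J`, the Iwahori factorization `J = (J ∩ N)(J ∩ K)`,
`K = GL_{n+1}(O)`, shows that the sum `fₐ` twisted by `χₐ` transforms by `χₐ⁻¹` under `J` on the
right; after translating by a diagonal matrix `Dₐ ∈ K` it also transforms by `χₐ⁻¹` under `N` on the
left. Comparing the two laws on shears that `g` carries to shears determines, row by row from the
bottom, where `fₐ ∘ ι` can be nonzero: in `N Dₐ (J ∩ K)`. On `K` the diagonal modulo `ϖ` singles out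
one `a`, whose twisted sum is `|𝒩_{n+1}| W(1)`.
-/

/-! ### The local ring `O` and its fractional ideals -/

/-- The fractional ideal `ϖ ^ m O` of `F`. -/
def fracIdeal (O : Subring F) (ϖ : F) (m : ℤ) : Submodule O F := Submodule.span O {ϖ ^ m}

/-- `O` is a discrete valuation ring with fraction field `F` and `ϖ` is a uniformizer of it. -/
structure IsUniformizer (O : Subring F) (ϖ : F) : Prop where
  mem : ϖ ∈ O
  inv_notMem : ϖ⁻¹ ∉ O
  exists_zpow_mul_unit : ∀ x : F, x ≠ 0 → ∃ (k : ℤ) (w : F), w ∈ O ∧ w⁻¹ ∈ O ∧ x = ϖ ^ k * w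

variable {O : Subring F} {ϖ : F}

theorem mem_fracIdeal {m : ℤ} {x : F} : x ∈ fracIdeal O ϖ m ↔ ∃ d ∈ O, x = ϖ ^ m * d := by
  simp only [fracIdeal, Submodule.mem_span_singleton, Subtype.exists, Subring.smul_def,
    smul_eq_mul, mul_comm (ϖ ^ m), eq_comm (a := x), exists_prop]

theorem mem_fracIdeal_natCast {k : ℕ} {x : F} :
    x ∈ fracIdeal O ϖ k ↔ ∃ d ∈ O, x = ϖ ^ k * d := by
  simp only [mem_fracIdeal, zpow_natCast]

theorem mem_fracIdeal_zero {x : F} : x ∈ fracIdeal O ϖ 0 ↔ x ∈ O := by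
  simp [mem_fracIdeal]

theorem mul_mem_fracIdeal_of_mem {m : ℤ} {x y : F} (hx : x ∈ O) (hy : y ∈ fracIdeal O ϖ m) :
    x * y ∈ fracIdeal O ϖ m :=
  (fracIdeal O ϖ m).smul_mem ⟨x, hx⟩ hy

theorem coe_units_mul_coe_inv (u : Oˣ) : ((u : O) : F) * ((u⁻¹ : Oˣ) : O) = 1 := by
  rw [← O.coe_mul, Units.mul_inv, O.coe_one]

namespace IsUniformizer

theorem ne_zero (hϖ : IsUniformizer O ϖ) : ϖ ≠ 0 := by
  rintro rfl
  exact hϖ.inv_notMem (by simp [O.zero_mem])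

theorem mul_mem_fracIdeal_add (hϖ : IsUniformizer O ϖ) {m k : ℤ} {x y : F}
    (hx : x ∈ fracIdeal O ϖ m) (hy : y ∈ fracIdeal O ϖ k) : x * y ∈ fracIdeal O ϖ (m + k) := by
  obtain ⟨d, hd, rfl⟩ := mem_fracIdeal.1 hx
  obtain ⟨e, he, rfl⟩ := mem_fracIdeal.1 hy
  exact mem_fracIdeal.2 ⟨d * e, O.mul_mem hd he, by rw [zpow_add₀ hϖ.ne_zero]; ring⟩

theorem fracIdeal_antitone (hϖ : IsUniformizer O ϖ) : Antitone (fracIdeal O ϖ) := by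
  intro m k hmk
  obtain ⟨c, rfl⟩ := Int.le.dest hmk
  rw [fracIdeal, Submodule.span_singleton_le_iff_mem, mem_fracIdeal]
  exact ⟨ϖ ^ c, O.pow_mem hϖ.mem c, by rw [zpow_add₀ hϖ.ne_zero, zpow_natCast]⟩

theorem mem_of_mem_fracIdeal (hϖ : IsUniformizer O ϖ) {m : ℤ} (hm : 0 ≤ m) {x : F}
    (hx : x ∈ fracIdeal O ϖ m) : x ∈ O :=
  mem_fracIdeal_zero.1 (hϖ.fracIdeal_antitone hm hx)

theorem mem_fracIdeal_neg_natCast (hϖ : IsUniformizer O ϖ) {k : ℕ} {x : F} :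
    x ∈ fracIdeal O ϖ (-k) ↔ ϖ ^ k * x ∈ O := by
  rw [mem_fracIdeal, _root_.zpow_neg, zpow_natCast]
  have hk : ϖ ^ k ≠ 0 := pow_ne_zero k hϖ.ne_zero
  constructor
  · rintro ⟨d, hd, rfl⟩
    rwa [mul_inv_cancel_left₀ hk]
  · exact fun h ↦ ⟨_, h, (inv_mul_cancel_left₀ hk x).symm⟩

theorem inv_mem_of_notMem_fracIdeal_one (hϖ : IsUniformizer O ϖ) {x : F}
    (hx : x ∉ fracIdeal O ϖ 1) : x⁻¹ ∈ O := by
  have hx0 : x ≠ 0 := fun h ↦ hx (h ▸ zero_mem _)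
  obtain ⟨k, w, hw, hw', hxw⟩ := hϖ.exists_zpow_mul_unit x hx0
  have hk : 0 ≤ -k := by
    by_contra! hk
    exact hx (hϖ.fracIdeal_antitone (show 1 ≤ k by lia) (mem_fracIdeal.2 ⟨w, hw, hxw⟩))
  refine hϖ.mem_of_mem_fracIdeal hk (mem_fracIdeal.2 ⟨w⁻¹, hw', ?_⟩)
  rw [hxw, mul_inv, _root_.zpow_neg]

theorem isUnit_iff (hϖ : IsUniformizer O ϖ) {x : O} :
    IsUnit x ↔ (x : F) ∉ fracIdeal O ϖ 1 := by
  constructor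
  · rintro ⟨u, rfl⟩ hu
    obtain ⟨d, hd, hxd⟩ := mem_fracIdeal.1 hu
    have hϖinv : ϖ⁻¹ = d * ((u⁻¹ : Oˣ) : O) := by
      rw [zpow_one] at hxd
      exact inv_eq_of_mul_eq_one_right (by rw [← mul_assoc, ← hxd, coe_units_mul_coe_inv])
    exact hϖ.inv_notMem (hϖinv ▸ O.mul_mem hd (SetLike.coe_mem _))
  · intro hx
    have hx0 : (x : F) ≠ 0 := fun h ↦ hx (h ▸ zero_mem _)
    exact IsUnit.of_mul_eq_one ⟨_, hϖ.inv_mem_of_notMem_fracIdeal_one hx⟩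
      (Subtype.ext (mul_inv_cancel₀ hx0))

theorem notMem_fracIdeal_one_of_sub_one_mem (hϖ : IsUniformizer O ϖ) {x : F}
    (hx : x - 1 ∈ fracIdeal O ϖ 1) : x ∉ fracIdeal O ϖ 1 := fun h ↦
  hϖ.isUnit_iff.1 isUnit_one (by simpa using sub_mem h hx)

theorem isLocalRing (hϖ : IsUniformizer O ϖ) : IsLocalRing O :=
  .of_nonunits_add fun x y hx hy ↦ by
    simp only [mem_nonunits_iff, hϖ.isUnit_iff, not_not] at hx hy ⊢
    exact add_mem hx hy

theorem residue_eq_zero_iff [IsLocalRing O] (hϖ : IsUniformizer O ϖ) {x : O} :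
    IsLocalRing.residue O x = 0 ↔ (x : F) ∈ fracIdeal O ϖ 1 := by
  rw [IsLocalRing.residue_eq_zero_iff, IsLocalRing.mem_maximalIdeal, mem_nonunits_iff,
    hϖ.isUnit_iff, not_not]

theorem residue_eq_iff [IsLocalRing O] (hϖ : IsUniformizer O ϖ) {x y : O} :
    IsLocalRing.residue O x = IsLocalRing.residue O y ↔ (x : F) - y ∈ fracIdeal O ϖ 1 := by
  rw [← sub_eq_zero, ← map_sub, hϖ.residue_eq_zero_iff, O.coe_sub]

end IsUniformizer

/-! ### Unramified characters -/

variable {R : Type*} [CommRing R]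

/-- The additive character `ψ` is trivial on `O` and nontrivial on `ϖ⁻¹ O`. -/
structure IsUnramified (O : Subring F) (ϖ : F) (ψ : AddChar F R) : Prop where
  map_eq_one : ∀ x ∈ O, ψ x = 1
  exists_map_ne_one : ∃ y : F, ϖ * y ∈ O ∧ ψ y ≠ 1

namespace IsUnramified

variable {ψ : AddChar F R}

theorem inv_notMem (hψ : IsUnramified O ϖ ψ) (hϖ : ϖ ≠ 0) : ϖ⁻¹ ∉ O := by
  obtain ⟨y, hy, hψy⟩ := hψ.exists_map_ne_one
  exact fun h ↦ hψy (hψ.map_eq_one y (inv_mul_cancel_left₀ hϖ y ▸ O.mul_mem h hy))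

theorem map_eq_map_of_sub_mem (hψ : IsUnramified O ϖ ψ) {x y : F} (h : x - y ∈ O) :
    ψ x = ψ y := by
  rw [← sub_add_cancel x y, ψ.map_add_eq_mul, hψ.map_eq_one _ h, one_mul]

theorem mem_fracIdeal_of_forall_map_eq_one (hψ : IsUnramified O ϖ ψ)
    (hϖ : IsUniformizer O ϖ) {m : ℤ} {z : F}
    (h : ∀ x ∈ fracIdeal O ϖ (-m), ψ (z * x) = 1) : z ∈ fracIdeal O ϖ m := by
  obtain ⟨y, hy, hψy⟩ := hψ.exists_map_ne_one
  rcases eq_or_ne z 0 with rfl | hz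
  · exact zero_mem _
  obtain ⟨k, w, hw, hw', hzw⟩ := hϖ.exists_zpow_mul_unit z hz
  refine hϖ.fracIdeal_antitone (le_of_not_gt fun hkm ↦ hψy ?_) (mem_fracIdeal.2 ⟨w, hw, hzw⟩)
  have hzinv : z⁻¹ ∈ fracIdeal O ϖ (-k) :=
    mem_fracIdeal.2 ⟨w⁻¹, hw', by rw [hzw, mul_inv, _root_.zpow_neg]⟩
  have hy' : y ∈ fracIdeal O ϖ (-(1 : ℕ)) := by
    rwa [hϖ.mem_fracIdeal_neg_natCast, pow_one]
  have hx := hϖ.fracIdeal_antitone (show -m ≤ -k + -(1 : ℕ) by lia)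
    (hϖ.mul_mem_fracIdeal_add hzinv hy')
  simpa only [mul_inv_cancel_left₀ hz] using h _ hx

end IsUnramified

/-! ### Subgroups of `GL m F` -/

variable {m : ℕ}

theorem mul_apply_self_of_isUpperTriangular {M N : Matrix (Fin m) (Fin m) F}
    (hM : M.IsUpperTriangular) (hN : N.IsUpperTriangular) (i : Fin m) :
    (M * N) i i = M i i * N i i := by
  rw [mul_apply, Finset.sum_eq_single i (fun l _ hl ↦ ?_) (by simp)]
  rcases hl.lt_or_gt with h | h
  · rw [hM h, zero_mul]
  · rw [hN h, mul_zero]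

/-- The group `N_m(F)` of upper triangular unipotent matrices. -/
def unitriangular (F : Type*) [Field F] (m : ℕ) : Subgroup (GL (Fin m) F) where
  carrier := {u | (∀ i j, j < i → u i j = 0) ∧ ∀ i, u i i = 1}
  one_mem' := ⟨fun _ _ h ↦ one_apply_ne h.ne', fun i ↦ one_apply_eq i⟩
  mul_mem' {u v} hu hv := by
    have hut : u.1.IsUpperTriangular := fun i j h ↦ hu.1 i j h
    have hvt : v.1.IsUpperTriangular := fun i j h ↦ hv.1 i j h
    refine ⟨fun i j h ↦ hut.mul hvt h, fun i ↦ ?_⟩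
    rw [Units.val_mul, mul_apply_self_of_isUpperTriangular hut hvt, hu.2, hv.2, one_mul]
  inv_mem' {u} hu := by
    have hut : u.1.IsUpperTriangular := fun i j h ↦ hu.1 i j h
    have hinv : (u⁻¹).1.IsUpperTriangular := by
      have := u.invertible
      exact coe_units_inv u ▸ blockTriangular_inv_of_blockTriangular hut
    refine ⟨fun i j h ↦ hinv h, fun i ↦ ?_⟩
    have hdiag := mul_apply_self_of_isUpperTriangular hut hinv i
    rw [← Units.val_mul, mul_inv_cancel, hu.2, one_mul] at hdiag
    rw [← hdiag, Units.val_one, one_apply_eq]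

theorem det_eq_one_of_upperUnitriangular {M : Matrix (Fin m) (Fin m) F}
    (hlower : ∀ i j, j < i → M i j = 0) (hdiag : ∀ i, M i i = 1) : M.det = 1 := by
  rw [det_of_isUpperTriangular fun i j h ↦ hlower i j h]
  exact Finset.prod_eq_one fun i _ ↦ hdiag i

theorem det_eq_one_of_mem_unitriangular {u : GL (Fin m) F} (hu : u ∈ unitriangular F m) :
    u.1.det = 1 :=
  det_eq_one_of_upperUnitriangular hu.1 hu.2

theorem exists_mem_unitriangular_eq {M : Matrix (Fin m) (Fin m) F}
    (hlower : ∀ i j, j < i → M i j = 0) (hdiag : ∀ i, M i i = 1) :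
    ∃ u ∈ unitriangular F m, u.1 = M := by
  have hdet : M.det = 1 := det_eq_one_of_upperUnitriangular hlower hdiag
  exact ⟨GeneralLinearGroup.mkOfDetNeZero M (hdet ▸ one_ne_zero), ⟨hlower, hdiag⟩, rfl⟩

/-- The group `GL_m(O)`, as a subgroup of `GL_m(F)`. -/
def integralGL (O : Subring F) (m : ℕ) : Subgroup (GL (Fin m) F) :=
  (GeneralLinearGroup.map O.subtype).range

theorem exists_map_subtype_eq {M : Matrix (Fin m) (Fin m) F} (hM : ∀ i j, M i j ∈ O) :
    ∃ M₀ : Matrix (Fin m) (Fin m) O, O.subtype.mapMatrix M₀ = M :=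
  ⟨of fun i j ↦ ⟨M i j, hM i j⟩, rfl⟩

theorem mem_integralGL_of_inv_det_mem {g : GL (Fin m) F} (hg : ∀ i j, g i j ∈ O)
    (hdet : (g.1.det)⁻¹ ∈ O) : g ∈ integralGL O m := by
  obtain ⟨g₀, hg₀⟩ := exists_map_subtype_eq hg
  have hdet₀ : O.subtype g₀.det = g.1.det := by rw [RingHom.map_det, hg₀]
  have hne : g.1.det ≠ 0 := ((isUnit_iff_isUnit_det _).1 g.isUnit).ne_zero
  have hunit : IsUnit g₀.det :=
    IsUnit.of_mul_eq_one ⟨_, hdet⟩ (O.subtype_injective (by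
      rw [map_mul, hdet₀, O.subtype_apply, mul_inv_cancel₀ hne, map_one]))
  exact ⟨GeneralLinearGroup.mk'' g₀ hunit, Units.ext hg₀⟩

theorem inv_det_mem_of_inv_apply_mem {g : GL (Fin m) F} (hg : ∀ i j, g⁻¹ i j ∈ O) :
    (g.1.det)⁻¹ ∈ O := by
  obtain ⟨M₀, hM₀⟩ := exists_map_subtype_eq hg
  have hdet : O.subtype M₀.det = (g.1.det)⁻¹ := by
    rw [RingHom.map_det, hM₀, coe_units_inv, det_nonsing_inv, Ring.inverse_eq_inv']
  exact hdet ▸ M₀.det.2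

theorem mem_integralGL_iff {g : GL (Fin m) F} : g ∈ integralGL O m ↔ InGLO O g := by
  constructor
  · rintro ⟨g₀, rfl⟩
    exact ⟨fun i j ↦ (g₀ i j).2, fun i j ↦ ((g₀⁻¹ : GL (Fin m) O) i j).2⟩
  · exact fun hg ↦ mem_integralGL_of_inv_det_mem hg.1 (inv_det_mem_of_inv_apply_mem hg.2)

theorem apply_mem_of_mem_integralGL {g : GL (Fin m) F} (hg : g ∈ integralGL O m) (i j : Fin m) :
    g i j ∈ O :=
  (mem_integralGL_iff.1 hg).1 i j

theorem inNO_iff {u : GL (Fin m) F} : InNO O u ↔ u ∈ unitriangular F m ⊓ integralGL O m := by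
  constructor
  · rintro ⟨hdiag, hlower, hupper⟩
    refine ⟨⟨hlower, hdiag⟩, mem_integralGL_of_inv_det_mem (fun i j ↦ ?_) ?_⟩
    · rcases lt_trichotomy i j with h | rfl | h
      · exact hupper i j h
      · exact hdiag i ▸ O.one_mem
      · exact hlower i j h ▸ O.zero_mem
    · rw [det_eq_one_of_mem_unitriangular ⟨hlower, hdiag⟩, inv_one]
      exact O.one_mem
  · exact fun ⟨hu, hint⟩ ↦ ⟨hu.2, hu.1, fun i j _ ↦ apply_mem_of_mem_integralGL hint i j⟩

/-! ### Shears -/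

/-- The unipotent element `1 + x yᵀ`, where the rank one matrix `x yᵀ` is strictly upper
triangular. -/
def shear (x y : Fin m → F) (h : ∀ i j, j ≤ i → x i * y j = 0) : GL (Fin m) F :=
  have hsq : vecMulVec x y * vecMulVec x y = 0 := by
    have hyx : y ⬝ᵥ x = 0 := Finset.sum_eq_zero fun i _ ↦ by rw [mul_comm, h i i le_rfl]
    rw [vecMulVec_mul_vecMulVec, hyx, zero_smul, vecMulVec_zero]
  { val := 1 + vecMulVec x y
    inv := 1 - vecMulVec x y
    val_inv := by rw [add_mul, mul_sub, mul_sub, hsq]; simp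
    inv_val := by rw [sub_mul, mul_add, mul_add, hsq]; simp }

section Shear

variable {x y : Fin m → F} {h : ∀ i j, j ≤ i → x i * y j = 0}

theorem shear_apply (i j : Fin m) :
    shear x y h i j = (1 : Matrix (Fin m) (Fin m) F) i j + x i * y j := rfl

theorem shear_mem_unitriangular : shear x y h ∈ unitriangular F m :=
  ⟨fun i j hij ↦ by rw [shear_apply, one_apply_ne hij.ne', h i j hij.le, add_zero],
    fun i ↦ by rw [shear_apply, one_apply_eq, h i i le_rfl, add_zero]⟩

theorem shear_mul_apply (g : GL (Fin m) F) (i j : Fin m) :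
    (shear x y h * g) i j = g i j + x i * (y ᵥ* g.1) j := by
  change ((1 + vecMulVec x y) * g.1) i j = _
  rw [add_mul, one_mul, vecMulVec_mul, Matrix.add_apply, vecMulVec_apply]

theorem mul_shear_apply (g : GL (Fin m) F) (i j : Fin m) :
    (g * shear x y h) i j = g i j + (g.1 *ᵥ x) i * y j := by
  change (g.1 * (1 + vecMulVec x y)) i j = _
  rw [mul_add, mul_one, mul_vecMulVec, Matrix.add_apply, vecMulVec_apply]

end Shear

/-- The element `1 + x δ_qᵀ`, where `x` is supported above the index `q`. -/
def colShear (q : Fin m) (x : Fin m → F) (hx : ∀ i, q ≤ i → x i = 0) : GL (Fin m) F :=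
  shear x (Pi.single q 1) fun i j hji ↦ by
    rcases eq_or_ne j q with rfl | hj
    · rw [hx i hji, zero_mul]
    · rw [Pi.single_eq_of_ne hj, mul_zero]

section ColShear

variable {q : Fin m} {x : Fin m → F} {hx : ∀ i, q ≤ i → x i = 0}

theorem colShear_mem_unitriangular : colShear q x hx ∈ unitriangular F m :=
  shear_mem_unitriangular

theorem inv_colShear :
    (colShear q x hx)⁻¹ = colShear q (-x) fun i hi ↦ by rw [Pi.neg_apply, hx i hi, neg_zero] :=
  Units.ext (by
    change 1 - vecMulVec x (Pi.single q 1) = 1 + vecMulVec (-x) (Pi.single q 1)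
    rw [neg_vecMulVec, sub_eq_add_neg])

theorem colShear_mul_apply (g : GL (Fin m) F) (i j : Fin m) :
    (colShear q x hx * g) i j = g i j + x i * g q j := by
  rw [colShear, shear_mul_apply, single_one_vecMul, row_apply]

theorem mul_colShear_apply (g : GL (Fin m) F) (i j : Fin m) :
    (g * colShear q x hx) i j = g i j + (g.1 *ᵥ x) i * (Pi.single q 1 : Fin m → F) j :=
  mul_shear_apply g i j

end ColShear

theorem sum_mul_colShear_superdiag {n : ℕ} {p : Fin n} {x : Fin (n + 1) → F}
    {hx : ∀ i, p.succ ≤ i → x i = 0} (c : Fin n → F) :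
    ∑ i, c i * colShear p.succ x hx i.castSucc i.succ = c p * x p.castSucc := by
  rw [Finset.sum_eq_single p (fun i _ hi ↦ ?_) (by simp)] <;>
    rw [colShear, shear_apply, one_apply_ne Fin.castSucc_lt_succ.ne, zero_add]
  · rw [Pi.single_eq_same, mul_one]
  · rw [Pi.single_eq_of_ne (Fin.succ_injective n |>.ne hi), mul_zero, mul_zero]

/-! ### The conjugated Iwahori subgroup -/

/-- The valuation required of the entry `(i, j)` of `g - 1` for `g` in `φ⁻¹ I φ`, where `I` is the
pro-unipotent Iwahori subgroup. -/
def lev (i j : Fin m) : ℤ := (i : ℤ) - j + if j ≤ i then 1 else 0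

theorem lev_of_le {i j : Fin m} (h : j ≤ i) : lev i j = i - j + 1 := by
  rw [lev, if_pos h]

theorem lev_of_lt {i j : Fin m} (h : i < j) : lev i j = i - j := by
  rw [lev, if_neg h.not_ge, add_zero]

theorem one_le_lev_of_le {i j : Fin m} (h : j ≤ i) : 1 ≤ lev i j := by
  simp only [lev_of_le h, Fin.le_def] at h ⊢
  lia

theorem lev_le_lev_add_lev (i l j : Fin m) : lev i j ≤ lev i l + lev l j := by
  simp only [lev, Fin.le_def]
  lia

/-- `g ∈ φ⁻¹ I φ`, where `I` is the pro-unipotent Iwahori subgroup of `GL_m(O)` (whose reduction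
modulo `ϖ` is upper triangular unipotent) and `φ = diag(ϖ⁻¹, …, ϖ^{-m})`. -/
def InConjIwahori (O : Subring F) (ϖ : F) (g : GL (Fin m) F) : Prop :=
  ∀ i j, g i j - (1 : Matrix (Fin m) (Fin m) F) i j ∈ fracIdeal O ϖ (lev i j)

namespace InConjIwahori

variable {g h : GL (Fin m) F}

theorem mul (hϖ : IsUniformizer O ϖ) (hg : InConjIwahori O ϖ g) (hh : InConjIwahori O ϖ h) :
    InConjIwahori O ϖ (g * h) := by
  intro i j
  have hsplit : (g * h).1 - 1 = (g.1 - 1) + (h.1 - 1) + (g.1 - 1) * (h.1 - 1) := by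
    rw [Units.val_mul]
    noncomm_ring
  rw [← Matrix.sub_apply, hsplit, Matrix.add_apply, mul_apply]
  refine add_mem (add_mem (hg i j) (hh i j)) (sum_mem fun l _ ↦ ?_)
  exact hϖ.fracIdeal_antitone (lev_le_lev_add_lev i l j)
    (hϖ.mul_mem_fracIdeal_add (hg i l) (hh l j))

theorem apply_mem_of_lt (hg : InConjIwahori O ϖ g) {i j : Fin m} (hij : i < j) :
    g i j ∈ fracIdeal O ϖ (i - j) := by
  simpa only [one_apply_ne hij.ne, sub_zero, lev_of_lt hij] using hg i j

theorem apply_self_sub_one_mem (hg : InConjIwahori O ϖ g) (i : Fin m) :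
    g i i - 1 ∈ fracIdeal O ϖ 1 := by
  simpa only [one_apply_eq, lev_of_le le_rfl, sub_self, zero_add] using hg i i

theorem apply_self_ne_zero (hϖ : IsUniformizer O ϖ) (hg : InConjIwahori O ϖ g) (i : Fin m) :
    g i i ≠ 0 := fun h ↦
  hϖ.notMem_fracIdeal_one_of_sub_one_mem (hg.apply_self_sub_one_mem i) (h ▸ zero_mem _)

theorem inv_apply_self_mem (hϖ : IsUniformizer O ϖ) (hg : InConjIwahori O ϖ g) (i : Fin m) :
    (g i i)⁻¹ ∈ O :=
  hϖ.inv_mem_of_notMem_fracIdeal_one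
    (hϖ.notMem_fracIdeal_one_of_sub_one_mem (hg.apply_self_sub_one_mem i))

theorem mem_integralGL_of_isLowerTriangular (hϖ : IsUniformizer O ϖ) (hg : InConjIwahori O ϖ g)
    (hlower : ∀ i j, i < j → g i j = 0) : g ∈ integralGL O m := by
  refine mem_integralGL_of_inv_det_mem (fun i j ↦ ?_) ?_
  · rcases lt_or_ge i j with hij | hji
    · exact hlower i j hij ▸ O.zero_mem
    · have hij := hϖ.mem_of_mem_fracIdeal (zero_le_one.trans (one_le_lev_of_le hji)) (hg i j)
      have hone : (1 : Matrix (Fin m) (Fin m) F) i j ∈ O := by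
        rw [one_apply]
        split_ifs
        exacts [O.one_mem, O.zero_mem]
      simpa only [sub_add_cancel] using O.add_mem hij hone
  · rw [det_of_isLowerTriangular g.1 fun i j hij ↦ hlower i j hij, ← Finset.prod_inv_distrib]
    exact O.prod_mem fun i _ ↦ hg.inv_apply_self_mem hϖ i

end InConjIwahori

theorem inConjIwahori_shear {x y : Fin m → F} {h : ∀ i j, j ≤ i → x i * y j = 0}
    (hxy : ∀ i j : Fin m, i < j → x i * y j ∈ fracIdeal O ϖ (i - j)) :
    InConjIwahori O ϖ (shear x y h) := by
  intro i j
  rw [shear_apply, add_sub_cancel_left]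
  rcases lt_or_ge i j with hij | hji
  · exact lev_of_lt hij ▸ hxy i j hij
  · exact h i j hji ▸ zero_mem _

theorem inConjIwahori_colShear {q : Fin m} {x : Fin m → F} {hx : ∀ i, q ≤ i → x i = 0}
    (h : ∀ i : Fin m, i < q → x i ∈ fracIdeal O ϖ (i - q)) :
    InConjIwahori O ϖ (colShear q x hx) := by
  refine inConjIwahori_shear fun i j hij ↦ ?_
  rcases eq_or_ne j q with rfl | hj
  · simpa only [Pi.single_eq_same, mul_one] using h i hij
  · simp only [Pi.single_eq_of_ne hj, mul_zero, zero_mem]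

theorem inConjN_iff (hϖ : IsUniformizer O ϖ) {u : GL (Fin m) F} :
    InConjN O ϖ u ↔ u ∈ unitriangular F m ∧ InConjIwahori O ϖ u := by
  have hlev {i j : Fin m} (hij : i < j) :
      u i j ∈ fracIdeal O ϖ (i - j) ↔ ϖ ^ ((j : ℕ) - (i : ℕ)) * u i j ∈ O := by
    have : (i : ℤ) - j = -((j - i : ℕ) : ℤ) := by
      have := Fin.lt_def.1 hij
      lia
    rw [this, hϖ.mem_fracIdeal_neg_natCast]
  constructor
  · rintro ⟨hdiag, hlower, hupper⟩
    refine ⟨⟨hlower, hdiag⟩, fun i j ↦ ?_⟩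
    rcases lt_trichotomy i j with h | rfl | h
    · rw [one_apply_ne h.ne, sub_zero, lev_of_lt h]
      exact (hlev h).2 (hupper i j h)
    · rw [hdiag, one_apply_eq, sub_self]
      exact zero_mem _
    · rw [hlower i j h, one_apply_ne h.ne', sub_zero]
      exact zero_mem _
  · exact fun ⟨hu, hJ⟩ ↦ ⟨hu.2, hu.1, fun i j hij ↦ (hlev hij).1 (hJ.apply_mem_of_lt hij)⟩

theorem inConjIwahori_of_inNO (hϖ : IsUniformizer O ϖ) {u : GL (Fin m) F} (hu : InNO O u) :
    InConjIwahori O ϖ u :=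
  ((inConjN_iff hϖ).1 ⟨hu.1, hu.2.1, fun i j hij ↦
    O.mul_mem (O.pow_mem hϖ.mem _) (hu.2.2 i j hij)⟩).2

theorem InConjIwahori.exists_eq_mul_column_eq_zero (hϖ : IsUniformizer O ϖ) {g : GL (Fin m) F}
    (hg : InConjIwahori O ϖ g) (q : Fin m) :
    ∃ s g' : GL (Fin m) F, s ∈ unitriangular F m ∧ InConjIwahori O ϖ s ∧ InConjIwahori O ϖ g' ∧
      g = s * g' ∧ (∀ i < q, g' i q = 0) ∧ ∀ i j, g q j = 0 → g' i j = g i j := by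
  let x : Fin m → F := fun i ↦ if i < q then g i q * (g q q)⁻¹ else 0
  have hx : ∀ i, q ≤ i → x i = 0 := fun i hi ↦ if_neg hi.not_gt
  have hxlev (i : Fin m) (hi : i < q) : x i ∈ fracIdeal O ϖ (i - q) := by
    simp only [x, if_pos hi, mul_comm (g i q)]
    exact mul_mem_fracIdeal_of_mem (hg.inv_apply_self_mem hϖ q) (hg.apply_mem_of_lt hi)
  refine ⟨colShear q x hx, (colShear q x hx)⁻¹ * g, colShear_mem_unitriangular,
    inConjIwahori_colShear hxlev, ?_, (mul_inv_cancel_left _ _).symm, fun i hi ↦ ?_,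
    fun i j hj ↦ ?_⟩ <;> rw [inv_colShear]
  · exact (inConjIwahori_colShear fun i hi ↦ neg_mem (hxlev i hi)).mul hϖ hg
  · rw [colShear_mul_apply, Pi.neg_apply, neg_mul]
    simp only [x, if_pos hi]
    rw [inv_mul_cancel_right₀ (hg.apply_self_ne_zero hϖ q), add_neg_cancel]
  · rw [colShear_mul_apply, hj, mul_zero, add_zero]

theorem InConjIwahori.exists_eq_mul (hϖ : IsUniformizer O ϖ) {g : GL (Fin m) F}
    (hg : InConjIwahori O ϖ g) :
    ∃ η κ : GL (Fin m) F, InConjN O ϖ η ∧ κ ∈ integralGL O m ∧ InConjIwahori O ϖ κ ∧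
      g = η * κ := by
  suffices H : ∀ p ≤ m, ∀ g : GL (Fin m) F, InConjIwahori O ϖ g →
      (∀ i j : Fin m, p ≤ j → i < j → g i j = 0) →
      ∃ η κ : GL (Fin m) F, (η ∈ unitriangular F m ∧ InConjIwahori O ϖ η) ∧
        κ ∈ integralGL O m ∧ InConjIwahori O ϖ κ ∧ g = η * κ by
    simp only [inConjN_iff hϖ]
    exact H m le_rfl g hg fun _ j hj ↦ absurd j.2 hj.not_gt
  intro p
  induction p with
  | zero =>
    intro _ g hg hzero
    refine ⟨1, g, ⟨one_mem _, fun i j ↦ ?_⟩,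
      hg.mem_integralGL_of_isLowerTriangular hϖ fun i j ↦ hzero i j (Nat.zero_le _), hg,
      (one_mul g).symm⟩
    simp only [Units.val_one, sub_self, zero_mem]
  | succ p ih =>
    intro hp g hg hzero
    obtain ⟨s, g', hsU, hs, hg', rfl, hcol, hrest⟩ :=
      hg.exists_eq_mul_column_eq_zero hϖ ⟨p, hp⟩
    obtain ⟨η, κ, ⟨hηU, hη⟩, hκ, hκJ, rfl⟩ := ih (by lia) g' hg' fun i j hpj hij ↦ by
      rcases (show ⟨p, hp⟩ ≤ j from hpj).eq_or_lt with rfl | hlt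
      · exact hcol i hij
      · rw [hrest i j (hzero _ j hlt hlt), hzero i j hlt hij]
    exact ⟨s * η, κ, ⟨mul_mem hsU hηU, hs.mul hϖ hη⟩, hκ, hκJ, (mul_assoc s η κ).symm⟩

/-! ### Twisted sums of a spherical Whittaker function -/

variable {n : ℕ} {ψ : AddChar F R}

/-- The function `g ↦ ψ(∑ᵢ aᵢ g_{i,i+1})` on matrices. -/
def superdiagChar (ψ : AddChar F R) (a : Fin n → O) (g : GL (Fin (n + 1)) F) : R :=
  ψ (∑ i, (a i : F) * g i.castSucc i.succ)

theorem lev_castSucc_add_lev_succ_nonneg (i : Fin n) (l : Fin (n + 1)) :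
    0 ≤ lev i.castSucc l + lev l i.succ := by
  simp only [lev, Fin.le_def, Fin.val_castSucc, Fin.val_succ]
  lia

theorem InConjIwahori.mul_superdiag_sub_mem (hϖ : IsUniformizer O ϖ) {g h : GL (Fin (n + 1)) F}
    (hg : InConjIwahori O ϖ g) (hh : InConjIwahori O ϖ h) (i : Fin n) :
    (g * h) i.castSucc i.succ - (g i.castSucc i.succ + h i.castSucc i.succ) ∈ O := by
  have hne : i.castSucc ≠ i.succ := Fin.castSucc_lt_succ.ne
  have hsplit : (g * h).1 - (g.1 + h.1) = (g.1 - 1) * (h.1 - 1) - 1 := by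
    rw [Units.val_mul]
    noncomm_ring
  rw [← Matrix.add_apply, ← Matrix.sub_apply, hsplit, Matrix.sub_apply, one_apply_ne hne, sub_zero,
    mul_apply]
  exact O.sum_mem fun l _ ↦ hϖ.mem_of_mem_fracIdeal (lev_castSucc_add_lev_succ_nonneg i l)
    (hϖ.mul_mem_fracIdeal_add (hg _ l) (hh l _))

theorem superdiagChar_mul (hψ : IsUnramified O ϖ ψ) (hϖ : IsUniformizer O ϖ) (a : Fin n → O)
    {g h : GL (Fin (n + 1)) F} (hg : InConjIwahori O ϖ g) (hh : InConjIwahori O ϖ h) :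
    superdiagChar ψ a (g * h) = superdiagChar ψ a g * superdiagChar ψ a h := by
  rw [superdiagChar, superdiagChar, superdiagChar, ← ψ.map_add_eq_mul]
  apply hψ.map_eq_map_of_sub_mem
  simp only [← Finset.sum_add_distrib, ← Finset.sum_sub_distrib, ← mul_add, ← mul_sub]
  exact O.sum_mem fun i _ ↦ O.mul_mem (a i).2 (hg.mul_superdiag_sub_mem hϖ hh i)

theorem superdiagChar_of_mem_integralGL (hψ : IsUnramified O ϖ ψ) (a : Fin n → O)
    {k : GL (Fin (n + 1)) F} (hk : k ∈ integralGL O (n + 1)) : superdiagChar ψ a k = 1 :=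
  hψ.map_eq_one _ (O.sum_mem fun i _ ↦ O.mul_mem (a i).2 (apply_mem_of_mem_integralGL hk _ _))

/-- `W` is a Whittaker function for `ψ` which is right invariant under `GL_{n+1}(O)`. -/
structure IsSphericalWhittaker (O : Subring F) (ψ : AddChar F R) (W : GL (Fin (n + 1)) F → R) :
    Prop where
  map_unitriangular_mul : ∀ u g, u ∈ unitriangular F (n + 1) →
    W (u * g) = ψ (∑ i : Fin n, u i.castSucc i.succ) * W g
  map_mul_integral : ∀ g k, k ∈ integralGL O (n + 1) → W (g * k) = W g

/-- `S` is a set of representatives of the cosets `φ⁻¹ N_m(O) φ / N_m(O)`. -/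
structure IsTransversal (O : Subring F) (ϖ : F) (S : Finset (GL (Fin m) F)) : Prop where
  inConjN : ∀ η ∈ S, InConjN O ϖ η
  existsUnique_mul : ∀ η : GL (Fin m) F, InConjN O ϖ η →
    ∃! ρ, ρ ∈ S ∧ ∃ ν : GL (Fin m) F, InNO O ν ∧ η = ρ * ν

theorem IsTransversal.eq_of_inv_mul_mem {S : Finset (GL (Fin m) F)} (hS : IsTransversal O ϖ S)
    (hϖ : IsUniformizer O ϖ) {η η' : GL (Fin m) F} (hη : η ∈ S) (hη' : η' ∈ S)
    (h : η⁻¹ * η' ∈ integralGL O m) : η = η' := by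
  have hU {ρ : GL (Fin m) F} (hρ : ρ ∈ S) : ρ ∈ unitriangular F m :=
    ((inConjN_iff hϖ).1 (hS.inConjN ρ hρ)).1
  exact (hS.existsUnique_mul η' (hS.inConjN η' hη')).unique
    ⟨hη, η⁻¹ * η', inNO_iff.2 (Subgroup.mem_inf.2 ⟨mul_mem (inv_mem (hU hη)) (hU hη'), h⟩),
      (mul_inv_cancel_left η η').symm⟩
    ⟨hη', 1, inNO_iff.2 (one_mem _), (mul_one η').symm⟩

theorem sum_eq_sum_of_injective_rel {α M : Type*} [AddCommMonoid M] {s : Finset α} {f g : α → M}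
    (r : α → α → Prop) (htotal : ∀ a ∈ s, ∃ b ∈ s, r a b)
    (hinj : ∀ a ∈ s, ∀ a' ∈ s, ∀ b ∈ s, r a b → r a' b → a = a')
    (hfg : ∀ a ∈ s, ∀ b ∈ s, r a b → f a = g b) : ∑ a ∈ s, f a = ∑ b ∈ s, g b := by
  choose! i hi hri using htotal
  have hinjOn : Set.InjOn i s := fun a ha a' ha' heq ↦
    hinj a ha a' ha' (i a) (hi a ha) (hri a ha) (heq ▸ hri a' ha')
  exact Finset.sum_nbij i hi hinjOn (Finset.surjOn_of_injOn_of_card_le i hi hinjOn le_rfl)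
    fun a ha ↦ hfg a ha (i a) (hi a ha) (hri a ha)

/-- The sum of the translates of `W` by the elements of `S`, twisted by `superdiagChar ψ a`. -/
def twistedSum (ψ : AddChar F R) (W : GL (Fin (n + 1)) F → R) (S : Finset (GL (Fin (n + 1)) F))
    (a : Fin n → O) (g : GL (Fin (n + 1)) F) : R :=
  ∑ η ∈ S, superdiagChar ψ a η * W (g * η)

section TwistedSum

variable {W : GL (Fin (n + 1)) F → R} {S : Finset (GL (Fin (n + 1)) F)} (a : Fin n → O)

theorem twistedSum_unitriangular_mul (hW : IsSphericalWhittaker O ψ W) {u : GL (Fin (n + 1)) F}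
    (hu : u ∈ unitriangular F (n + 1)) (g : GL (Fin (n + 1)) F) :
    twistedSum ψ W S a (u * g) =
      ψ (∑ i : Fin n, u i.castSucc i.succ) * twistedSum ψ W S a g := by
  simp only [twistedSum, Finset.mul_sum, mul_assoc u, hW.map_unitriangular_mul u _ hu]
  exact Finset.sum_congr rfl fun η _ ↦ mul_left_comm _ _ _

theorem superdiagChar_mul_twistedSum_mul (hϖ : IsUniformizer O ϖ) (hψ : IsUnramified O ϖ ψ)
    (hW : IsSphericalWhittaker O ψ W) (hS : IsTransversal O ϖ S) {j : GL (Fin (n + 1)) F}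
    (hj : InConjIwahori O ϖ j) (g : GL (Fin (n + 1)) F) :
    superdiagChar ψ a j * twistedSum ψ W S a (g * j) = twistedSum ψ W S a g := by
  have hJ {η : GL (Fin (n + 1)) F} (hη : η ∈ S) : InConjIwahori O ϖ η :=
    ((inConjN_iff hϖ).1 (hS.inConjN η hη)).2
  rw [twistedSum, Finset.mul_sum]
  refine sum_eq_sum_of_injective_rel
    (fun η ρ ↦ ∃ κ ∈ integralGL O (n + 1), InConjIwahori O ϖ κ ∧ j * η = ρ * κ) ?_ ?_ ?_
  · intro η hη
    obtain ⟨η', κ, hη', hκ, hκJ, heq⟩ := (hj.mul hϖ (hJ hη)).exists_eq_mul hϖ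
    obtain ⟨ρ, ⟨hρ, ν, hν, rfl⟩, -⟩ := hS.existsUnique_mul η' hη'
    exact ⟨ρ, hρ, ν * κ, mul_mem (inNO_iff.1 hν).2 hκ,
      (inConjIwahori_of_inNO hϖ hν).mul hϖ hκJ, heq.trans (mul_assoc ρ ν κ)⟩
  · rintro η hη η' hη' ρ - ⟨κ, hκ, -, heq⟩ ⟨κ', hκ', -, heq'⟩
    have hquot : η⁻¹ * η' = κ⁻¹ * κ' := by
      rw [eq_inv_mul_of_mul_eq heq, eq_inv_mul_of_mul_eq heq']
      group
    exact hS.eq_of_inv_mul_mem hϖ hη hη' (hquot ▸ mul_mem (inv_mem hκ) hκ')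
  · rintro η hη ρ hρ ⟨κ, hκ, hκJ, heq⟩
    rw [← mul_assoc, ← superdiagChar_mul hψ hϖ a hj (hJ hη), mul_assoc g, heq,
      superdiagChar_mul hψ hϖ a (hJ hρ) hκJ, superdiagChar_of_mem_integralGL hψ a hκ, mul_one,
      ← mul_assoc g, hW.map_mul_integral _ κ hκ]

end TwistedSum

/-! ### Expansion of the weights into twists -/

section ResidueField

open IsLocalRing

/-- Every quotient `O / ϖ ^ k O` has `ℓ ^ k` elements. -/
def HasResidueCard (O : Subring F) (ϖ : F) (ℓ : ℕ) : Prop :=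
  ∀ k : ℕ, ∃ T : Finset F, (↑T : Set F) ⊆ (O : Set F) ∧ T.card = ℓ ^ k ∧
    ∀ y ∈ O, ∃! r, r ∈ T ∧ ∃ d ∈ O, y - r = ϖ ^ k * d

theorem HasResidueCard.pos {ℓ : ℕ} (hℓ : HasResidueCard O ϖ ℓ) : 0 < ℓ := by
  obtain ⟨T, -, hcard, hT⟩ := hℓ 1
  obtain ⟨r, ⟨hr, -⟩, -⟩ := hT 0 O.zero_mem
  exact pow_one ℓ ▸ hcard ▸ Finset.card_pos.2 ⟨r, hr⟩

variable [IsLocalRing O]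

theorem HasResidueCard.natCard_residueField {ℓ : ℕ} (hℓ : HasResidueCard O ϖ ℓ)
    (hϖ : IsUniformizer O ϖ) : Nat.card (ResidueField O) = ℓ := by
  obtain ⟨T, hTO, hcard, hT⟩ := hℓ 1
  have hcongr {x y : O} : residue O x = residue O y ↔ ∃ d ∈ O, (x : F) - y = ϖ ^ 1 * d := by
    rw [hϖ.residue_eq_iff, ← mem_fracIdeal_natCast, Nat.cast_one]
  have hbij : Function.Bijective fun t : T ↦ residue O ⟨t, hTO t.2⟩ := by
    refine ⟨fun t t' h ↦ Subtype.ext ?_, fun r ↦ ?_⟩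
    · exact (hT t (hTO t.2)).unique
        ⟨t.2, hcongr.1 (rfl : residue O ⟨t, hTO t.2⟩ = _)⟩ ⟨t'.2, hcongr.1 h⟩
    · obtain ⟨y, rfl⟩ := residue_surjective r
      obtain ⟨t, ⟨ht, hyt⟩, -⟩ := hT y y.2
      exact ⟨⟨t, ht⟩, (hcongr.2 hyt).symm⟩
  rw [← Nat.card_eq_of_bijective _ hbij, Nat.card_eq_fintype_card, Fintype.card_coe, hcard,
    pow_one]

/-- The finite type structure on the residue field provided by its cardinality. -/
@[reducible]
noncomputable def HasResidueCard.fintypeResidueField {ℓ : ℕ} (hℓ : HasResidueCard O ϖ ℓ)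
    (hϖ : IsUniformizer O ϖ) : Fintype (ResidueField O) :=
  have : Finite (ResidueField O) :=
    Nat.finite_of_card_ne_zero ((hℓ.natCard_residueField hϖ).trans_ne hℓ.pos.ne')
  Fintype.ofFinite _

theorem exists_addChar_residueField (hϖ : IsUniformizer O ϖ) (hψ : IsUnramified O ϖ ψ) {x : F}
    (hx : x ∈ fracIdeal O ϖ (-1)) :
    ∃ χ : AddChar (ResidueField O) R, ∀ d : O, χ (residue O d) = ψ (d * x) := by
  have hcongr {d e : O} (h : residue O d = residue O e) : ψ (d * x) = ψ (e * x) := by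
    refine hψ.map_eq_map_of_sub_mem ?_
    rw [← sub_mul]
    have hmem := hϖ.mul_mem_fracIdeal_add (hϖ.residue_eq_iff.1 h) hx
    rwa [add_neg_cancel, mem_fracIdeal_zero] at hmem
  let lift : ResidueField O → O := Function.surjInv residue_surjective
  have hlift (r : ResidueField O) : residue O (lift r) = r :=
    Function.surjInv_eq residue_surjective r
  refine ⟨⟨fun r ↦ ψ (lift r * x), ?_, fun r s ↦ ?_⟩, fun d ↦ hcongr (hlift (residue O d))⟩
  · rw [hcongr (e := 0) (by rw [hlift, map_zero]), O.coe_zero, zero_mul, ψ.map_zero_eq_one]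
  · rw [hcongr (e := lift r + lift s) (by rw [map_add, hlift, hlift, hlift]), O.coe_add, add_mul,
      ψ.map_add_eq_mul]

theorem residue_units_map_surjective :
    Function.Surjective (Units.map (residue O).toMonoidHom) :=
  surjective_units_map_of_local_ringHom (residue O) residue_surjective inferInstance

/-- A set-theoretic section of the reduction map `Oˣ → kˣ`, where `k` is the residue field. -/
noncomputable def unitLift (r : (ResidueField O)ˣ) : Oˣ :=
  Function.surjInv residue_units_map_surjective r

theorem units_map_residue_unitLift (r : (ResidueField O)ˣ) :
    Units.map (residue O).toMonoidHom (unitLift r) = r :=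
  Function.surjInv_eq residue_units_map_surjective r

theorem residue_unitLift (r : (ResidueField O)ˣ) : residue O (unitLift r : O) = r :=
  congrArg Units.val (units_map_residue_unitLift r)

variable [IsDomain R] [Fintype (ResidueField O)] [DecidableEq (ResidueField O)]

theorem sum_map_unitLift_mul (hϖ : IsUniformizer O ϖ) (hψ : IsUnramified O ϖ ψ) {x : F}
    (hx : x ∈ fracIdeal O ϖ (-1)) [Decidable (x ∈ O)] :
    ∑ r : (ResidueField O)ˣ, ψ ((unitLift r : O) * x) =
      (if x ∈ O then (Fintype.card (ResidueField O) : R) else 0) - 1 := by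
  classical
  obtain ⟨χ, hχ⟩ := exists_addChar_residueField hϖ hψ hx
  have hχ0 : χ = 0 ↔ x ∈ O := by
    refine ⟨fun h ↦ mem_fracIdeal_zero.1 (hψ.mem_fracIdeal_of_forall_map_eq_one hϖ ?_), fun h ↦ ?_⟩
    · intro d hd
      have hdO : d ∈ O := mem_fracIdeal_zero.1 (neg_zero (G := ℤ) ▸ hd)
      rw [mul_comm, ← hχ ⟨d, hdO⟩, h, AddChar.zero_apply]
    · ext r
      obtain ⟨d, rfl⟩ := residue_surjective r
      rw [hχ, hψ.map_eq_one _ (O.mul_mem d.2 h), AddChar.zero_apply]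
  calc ∑ r : (ResidueField O)ˣ, ψ ((unitLift r : O) * x)
      = ∑ r : (ResidueField O)ˣ, χ r := by simp only [← hχ, residue_unitLift]
    _ = ∑ r : {r : ResidueField O // r ≠ 0}, χ r :=
        unitsEquivNeZero.sum_comp fun r : {r : ResidueField O // r ≠ 0} ↦ χ r
    _ = ∑ r, χ r - 1 := by
        rw [Fintype.sum_eq_add_sum_subtype_ne χ 0, χ.map_zero_eq_one, add_sub_cancel_left]
    _ = _ := by simp only [AddChar.sum_eq_ite, hχ0]

theorem addChar_sum {ι A M : Type*} [AddCommMonoid A] [CommMonoid M] (χ : AddChar A M)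
    (s : Finset ι) (f : ι → A) : χ (∑ i ∈ s, f i) = ∏ i ∈ s, χ (f i) :=
  (congrArg χ.toMonoidHom (ofAdd_sum s f)).trans (map_prod χ.toMonoidHom _ s)

theorem pow_sInt_eq_sum_superdiagChar (hϖ : IsUniformizer O ϖ) (hψ : IsUnramified O ϖ ψ)
    {η : GL (Fin (n + 1)) F} (hη : InConjIwahori O ϖ η) :
    (1 - (Fintype.card (ResidueField O) : R)) ^ sInt O η =
      (-1) ^ n * ∑ a : Fin n → (ResidueField O)ˣ,
        superdiagChar ψ (fun i ↦ (unitLift (a i) : O)) η := by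
  classical
  have hlev (i : Fin n) : η i.castSucc i.succ ∈ fracIdeal O ϖ (-1) := by
    convert hη.apply_mem_of_lt (Fin.castSucc_lt_succ (i := i)) using 2
    simp
  calc (1 - (Fintype.card (ResidueField O) : R)) ^ sInt O η
      = ∏ i : Fin n, if η i.castSucc i.succ ∈ O
          then 1 - (Fintype.card (ResidueField O) : R) else 1 := by
        rw [Finset.prod_ite, Finset.prod_const, Finset.prod_const_one, mul_one, sInt,
          Nat.card_eq_fintype_card, Fintype.card_subtype]
    _ = ∏ i : Fin n, -1 * ∑ r : (ResidueField O)ˣ,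
          ψ ((unitLift r : O) * η i.castSucc i.succ) := by
        refine Finset.prod_congr rfl fun i _ ↦ ?_
        rw [sum_map_unitLift_mul hϖ hψ (hlev i)]
        split_ifs <;> ring
    _ = (-1) ^ n * ∑ a : Fin n → (ResidueField O)ˣ,
          ∏ i, ψ ((unitLift (a i) : O) * η i.castSucc i.succ) := by
        rw [Finset.prod_mul_distrib, Finset.prod_const, Finset.card_fin, Finset.prod_univ_sum,
          Fintype.piFinset_univ]
    _ = _ := by simp only [superdiagChar, addChar_sum]

theorem sum_pow_sInt_mul_eq {ℓ : ℕ} (hϖ : IsUniformizer O ϖ) (hℓ : HasResidueCard O ϖ ℓ)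
    (hψ : IsUnramified O ϖ ψ) {W : GL (Fin (n + 1)) F → R} {S : Finset (GL (Fin (n + 1)) F)}
    (hS : IsTransversal O ϖ S) (g : GL (Fin (n + 1)) F) :
    ∑ η ∈ S, (1 - (ℓ : R)) ^ sInt O η * W (g * η) =
      (-1) ^ n * ∑ a : Fin n → (ResidueField O)ˣ,
        twistedSum ψ W S (fun i ↦ (unitLift (a i) : O)) g := by
  simp only [twistedSum, ← hℓ.natCard_residueField hϖ, Nat.card_eq_fintype_card]
  rw [Finset.sum_comm, Finset.mul_sum]
  refine Finset.sum_congr rfl fun η hη ↦ ?_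
  rw [pow_sInt_eq_sum_superdiagChar hϖ hψ ((inConjN_iff hϖ).1 (hS.inConjN η hη)).2, mul_assoc,
    Finset.sum_mul]

end ResidueField

/-! ### The number of cosets -/

/-- Finite sets of allowed entries for normal forms of `φ⁻¹ N_m(O) φ / N_m(O)`: above the diagonal
they represent `ϖ^{i-j} O / O`. -/
structure IsEntrySystem (O : Subring F) (ϖ : F) (B : Fin m → Fin m → Finset F) : Prop where
  eq_of_le : ∀ i j, j ≤ i → B i j = {(1 : Matrix (Fin m) (Fin m) F) i j}
  mem_fracIdeal : ∀ i j : Fin m, i < j → ∀ r ∈ B i j, r ∈ fracIdeal O ϖ (i - j)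
  existsUnique_sub_mem : ∀ i j : Fin m, i < j → ∀ y ∈ fracIdeal O ϖ (i - j),
    ∃! r, r ∈ B i j ∧ y - r ∈ O

namespace IsEntrySystem

variable {B : Fin m → Fin m → Finset F}

theorem inConjN (hB : IsEntrySystem O ϖ B) (hϖ : IsUniformizer O ϖ) {ρ : GL (Fin m) F}
    (hρ : ∀ i j, ρ i j ∈ B i j) : InConjN O ϖ ρ := by
  have hlower {i j : Fin m} (hji : j ≤ i) : ρ i j = (1 : Matrix (Fin m) (Fin m) F) i j :=
    Finset.mem_singleton.1 (hB.eq_of_le i j hji ▸ hρ i j)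
  refine (inConjN_iff hϖ).2 ⟨⟨fun i j h ↦ ?_, fun i ↦ ?_⟩, fun i j ↦ ?_⟩
  · rw [hlower h.le, one_apply_ne h.ne']
  · rw [hlower le_rfl, one_apply_eq]
  · rcases lt_or_ge i j with h | h
    · rw [one_apply_ne h.ne, sub_zero, lev_of_lt h]
      exact hB.mem_fracIdeal i j h _ (hρ i j)
    · rw [hlower h, sub_self]
      exact zero_mem _

theorem exists_apply_eq (hB : IsEntrySystem O ϖ B) {M : Fin m → Fin m → F}
    (hM : ∀ i j, M i j ∈ B i j) : ∃ ρ : GL (Fin m) F, (fun i j ↦ ρ i j) = M := by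
  have hlower {i j : Fin m} (hji : j ≤ i) : M i j = (1 : Matrix (Fin m) (Fin m) F) i j :=
    Finset.mem_singleton.1 (hB.eq_of_le i j hji ▸ hM i j)
  have hdet : (of M).det = 1 := det_eq_one_of_upperUnitriangular
    (fun i j hji ↦ (hlower hji.le).trans (one_apply_ne hji.ne'))
    fun i ↦ (hlower le_rfl).trans (one_apply_eq i)
  exact ⟨GeneralLinearGroup.mkOfDetNeZero (of M) (hdet ▸ one_ne_zero), rfl⟩

theorem exists_mul_row_mem (hB : IsEntrySystem O ϖ B) (hϖ : IsUniformizer O ϖ)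
    {η : GL (Fin m) F} (hη : InConjN O ϖ η) (p : Fin m) :
    ∃ ν : GL (Fin m) F, InNO O ν ∧ (∀ j, (η * ν) p j ∈ B p j) ∧
      ∀ i j, p < i → (η * ν) i j = η i j := by
  have hηJ := ((inConjN_iff hϖ).1 hη).2
  choose! r hr using hB.existsUnique_sub_mem p
  let c : Fin m → F := fun j ↦ if p < j then r j (η p j) - η p j else 0
  have hcO (j : Fin m) : c j ∈ O := by
    by_cases hj : p < j
    · simp only [c, if_pos hj, ← neg_sub (η p j)]
      exact O.neg_mem (hr j hj _ (hηJ.apply_mem_of_lt hj)).1.2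
    · simp only [c, if_neg hj, O.zero_mem]
  have hc (i j : Fin m) (hji : j ≤ i) : (Pi.single p 1 : Fin m → F) i * c j = 0 := by
    rcases eq_or_ne i p with rfl | hi
    · simp only [c, if_neg hji.not_gt, mul_zero]
    · rw [Pi.single_eq_of_ne hi, zero_mul]
  have hmul (i j : Fin m) : (η * shear _ c hc) i j = η i j + η i p * c j := by
    rw [mul_shear_apply, mulVec_single_one, col_apply]
  refine ⟨shear _ c hc, ⟨shear_mem_unitriangular.2, shear_mem_unitriangular.1, fun i j hij ↦ ?_⟩,
    fun j ↦ ?_, fun i j hi ↦ ?_⟩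
  · rw [shear_apply, one_apply_ne hij.ne, zero_add]
    exact O.mul_mem (by rw [Pi.single_apply]; split_ifs; exacts [O.one_mem, O.zero_mem]) (hcO j)
  · rw [hmul, hη.1, one_mul]
    by_cases hj : p < j
    · simp only [c, if_pos hj, add_sub_cancel]
      exact (hr j hj _ (hηJ.apply_mem_of_lt hj)).1.1
    · simp only [c, if_neg hj, add_zero]
      rw [hB.eq_of_le p j (not_lt.1 hj), Finset.mem_singleton]
      rcases (not_lt.1 hj).eq_or_lt with rfl | hlt
      · rw [hη.1, one_apply_eq]
      · rw [hη.2.1 p j hlt, one_apply_ne hlt.ne']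
  · rw [hmul, hη.2.1 i p hi, zero_mul, add_zero]

theorem exists_mul_mem (hB : IsEntrySystem O ϖ B) (hϖ : IsUniformizer O ϖ) {η : GL (Fin m) F}
    (hη : InConjN O ϖ η) : ∃ ν : GL (Fin m) F, InNO O ν ∧ ∀ i j, (η * ν) i j ∈ B i j := by
  suffices H : ∀ p ≤ m, ∃ ν : GL (Fin m) F, InNO O ν ∧ ∀ i j : Fin m, p ≤ i → (η * ν) i j ∈ B i j by
    simpa only [Nat.zero_le, true_imp_iff] using H 0 m.zero_le
  intro p hp
  induction hp using Nat.decreasingInduction with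
  | self => exact ⟨1, inNO_iff.2 (one_mem _), fun i _ hi ↦ absurd i.2 hi.not_gt⟩
  | of_succ p hp ih =>
    obtain ⟨ν, hν, hmem⟩ := ih
    have hην : InConjN O ϖ (η * ν) := by
      obtain ⟨hηU, hηJ⟩ := (inConjN_iff hϖ).1 hη
      exact (inConjN_iff hϖ).2 ⟨mul_mem hηU (inNO_iff.1 hν).1,
        hηJ.mul hϖ (inConjIwahori_of_inNO hϖ hν)⟩
    obtain ⟨ν', hν', hrow, hrest⟩ := hB.exists_mul_row_mem hϖ hην ⟨p, hp⟩
    refine ⟨ν * ν', inNO_iff.2 (mul_mem (inNO_iff.1 hν) (inNO_iff.1 hν')), fun i j hi ↦ ?_⟩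
    rw [← mul_assoc]
    rcases (show ⟨p, hp⟩ ≤ i from hi).eq_or_lt with rfl | hlt
    · exact hrow j
    · exact hrest i j hlt ▸ hmem i j hlt

theorem eq_of_mul_eq (hB : IsEntrySystem O ϖ B) (hϖ : IsUniformizer O ϖ)
    {ρ σ ν : GL (Fin m) F} (hρ : ∀ i j, ρ i j ∈ B i j) (hσ : ∀ i j, σ i j ∈ B i j)
    (hν : InNO O ν) (h : ρ = σ * ν) : ρ = σ := by
  suffices hν1 : ∀ p j, ν p j = (1 : Matrix (Fin m) (Fin m) F) p j by
    rw [h, show ν = 1 from Units.ext (Matrix.ext hν1), mul_one]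
  have hσN := hB.inConjN hϖ hσ
  intro p
  induction p using WellFoundedGT.induction with | _ p ih
  intro j
  rcases lt_trichotomy p j with hpj | rfl | hjp
  · have hentry : ρ p j = σ p j + ν p j := by
      rw [h, Units.val_mul, mul_apply, ← sub_eq_iff_eq_add']
      calc _ = ∑ l, σ p l * (ν l j - (1 : Matrix (Fin m) (Fin m) F) l j) := by
            simp only [mul_sub, Finset.sum_sub_distrib]
            rw [← mul_apply, ← mul_apply, mul_one]
        _ = σ p p * (ν p j - (1 : Matrix (Fin m) (Fin m) F) p j) :=
            Finset.sum_eq_single p (fun l _ hl ↦ by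
              rcases hl.lt_or_gt with hlt | hgt
              · rw [hσN.2.1 p l hlt, zero_mul]
              · rw [ih l hgt, sub_self, mul_zero]) (by simp)
        _ = ν p j := by rw [hσN.1, one_mul, one_apply_ne hpj.ne, sub_zero]
    have hsub : ρ p j - σ p j = ν p j := sub_eq_iff_eq_add'.2 hentry
    have heq : ρ p j = σ p j :=
      (hB.existsUnique_sub_mem p j hpj (ρ p j) (hB.mem_fracIdeal p j hpj _ (hρ p j))).unique
        ⟨hρ p j, by simp only [sub_self, O.zero_mem]⟩ ⟨hσ p j, hsub ▸ hν.2.2 p j hpj⟩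
    rw [← hsub, heq, sub_self, one_apply_ne hpj.ne]
  · rw [hν.1, one_apply_eq]
  · rw [hν.2.1 p j hjp, one_apply_ne hjp.ne']

theorem card_eq (hB : IsEntrySystem O ϖ B) (hϖ : IsUniformizer O ϖ) {S : Finset (GL (Fin m) F)}
    (hS : IsTransversal O ϖ S) : S.card = ∏ i, ∏ j, (B i j).card := by
  have hred : ∀ ρ ∈ S, ∃ ν : GL (Fin m) F, InNO O ν ∧ ∀ i j, (ρ * ν) i j ∈ B i j :=
    fun ρ hρ ↦ hB.exists_mul_mem hϖ (hS.inConjN ρ hρ)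
  choose! ν hν hmem using hred
  have hcard : (Fintype.piFinset fun i ↦ Fintype.piFinset (B i)).card = ∏ i, ∏ j, (B i j).card := by
    simp only [Fintype.card_piFinset]
  rw [← hcard]
  refine Finset.card_nbij (fun ρ i j ↦ (ρ * ν ρ) i j) (fun ρ hρ ↦ ?_) (fun ρ hρ σ hσ h ↦ ?_)
    fun M hM ↦ ?_
  · simpa only [Finset.mem_coe, Fintype.mem_piFinset] using hmem ρ hρ
  · have heq : ρ * ν ρ = σ * ν σ := Units.ext h
    have hquot : ρ⁻¹ * σ = ν ρ * (ν σ)⁻¹ := by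
      rw [inv_mul_eq_iff_eq_mul, ← mul_assoc, heq, mul_inv_cancel_right]
    exact hS.eq_of_inv_mul_mem hϖ hρ hσ
      (hquot ▸ mul_mem (inNO_iff.1 (hν ρ hρ)).2 (inv_mem (inNO_iff.1 (hν σ hσ)).2))
  · have hrow (i j) : M i j ∈ B i j := Fintype.mem_piFinset.1 (Fintype.mem_piFinset.1 hM i) j
    obtain ⟨μ, rfl⟩ := hB.exists_apply_eq hrow
    obtain ⟨ρ, ⟨hρ, ν', hν', rfl⟩, -⟩ := hS.existsUnique_mul μ (hB.inConjN hϖ hrow)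
    have hquot : InNO O ((ν ρ)⁻¹ * ν') := inNO_iff.2
      (mul_mem (inv_mem (inNO_iff.1 (hν ρ hρ))) (inNO_iff.1 hν'))
    have heq := hB.eq_of_mul_eq hϖ hrow (hmem ρ hρ) hquot (by group)
    exact ⟨ρ, hρ, congrArg (fun (g : GL (Fin m) F) i j ↦ g i j) heq.symm⟩

end IsEntrySystem

theorem HasResidueCard.exists_transversal_fracIdeal {ℓ : ℕ} (hℓ : HasResidueCard O ϖ ℓ)
    (hϖ : IsUniformizer O ϖ) (k : ℕ) : ∃ T : Finset F, T.card = ℓ ^ k ∧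
      (∀ r ∈ T, r ∈ fracIdeal O ϖ (-k)) ∧
      ∀ y ∈ fracIdeal O ϖ (-k), ∃! r, r ∈ T ∧ y - r ∈ O := by
  classical
  obtain ⟨T, hTO, hcard, hT⟩ := hℓ k
  have hϖk : ϖ ^ k ≠ 0 := pow_ne_zero k hϖ.ne_zero
  have hmem {r : F} : r ∈ T.image ((ϖ ^ k)⁻¹ * ·) ↔ ϖ ^ k * r ∈ T := by
    simp only [Finset.mem_image, inv_mul_eq_iff_eq_mul₀ hϖk, exists_eq_right]
  have hsub {y r : F} : y - r ∈ O ↔ ∃ d ∈ O, ϖ ^ k * y - ϖ ^ k * r = ϖ ^ k * d := by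
    simp only [← mul_sub, mul_right_inj' hϖk, exists_eq_right']
  refine ⟨T.image ((ϖ ^ k)⁻¹ * ·), ?_, fun r hr ↦ ?_, fun y hy ↦ ?_⟩
  · rw [Finset.card_image_of_injective _ (mul_right_injective₀ (inv_ne_zero hϖk)), hcard]
  · exact hϖ.mem_fracIdeal_neg_natCast.2 (hTO (hmem.1 hr))
  · simp only [hmem, hsub]
    exact ((mulLeft_bijective₀ _ hϖk).existsUnique_iff).1 (hT _ (hϖ.mem_fracIdeal_neg_natCast.1 hy))

theorem HasResidueCard.exists_isEntrySystem {ℓ : ℕ} (hℓ : HasResidueCard O ϖ ℓ)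
    (hϖ : IsUniformizer O ϖ) (m : ℕ) : ∃ B : Fin m → Fin m → Finset F, IsEntrySystem O ϖ B ∧
      ∀ i j, (B i j).card = ℓ ^ ((j : ℕ) - i) := by
  choose T hcard hmem hT using hℓ.exists_transversal_fracIdeal hϖ
  have hlev {i j : Fin m} (hij : i < j) : (i : ℤ) - j = -((j - i : ℕ) : ℤ) := by
    have := Fin.lt_def.1 hij
    lia
  refine ⟨fun i j ↦ if i < j then T (j - i) else {(1 : Matrix (Fin m) (Fin m) F) i j},
    ⟨fun i j hji ↦ if_neg hji.not_gt, fun i j hij ↦ ?_, fun i j hij ↦ ?_⟩, fun i j ↦ ?_⟩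
  · rw [if_pos hij, hlev hij]
    exact hmem _
  · rw [if_pos hij, hlev hij]
    exact hT _
  · dsimp only
    split_ifs with hij
    · exact hcard _
    · rw [Finset.card_singleton, Nat.sub_eq_zero_of_le (Fin.le_def.1 (not_lt.1 hij)), pow_zero]

theorem six_mul_sum_sum_tsub (n : ℕ) :
    6 * ∑ i ∈ Finset.range (n + 1), ∑ j ∈ Finset.range (n + 1), (j - i) =
      n * (n + 1) * (n + 2) := by
  induction n with
  | zero => rfl
  | succ n ih =>
    have hlast : ∑ i ∈ Finset.range (n + 1), (n + 1 - i) = ∑ i ∈ Finset.range (n + 2), i := by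
      rw [← Finset.sum_range_reflect (fun i ↦ i) (n + 2), Finset.sum_range_succ _ (n + 1)]
      simp
    have hgauss := Finset.sum_range_id_mul_two (n + 2)
    have hrow : ∑ j ∈ Finset.range (n + 2), (j - (n + 1)) = 0 :=
      Finset.sum_eq_zero fun j hj ↦ tsub_eq_zero_of_le (Nat.lt_succ_iff.1 (Finset.mem_range.1 hj))
    have hsplit : ∑ i ∈ Finset.range (n + 2), ∑ j ∈ Finset.range (n + 2), (j - i) =
        ∑ i ∈ Finset.range (n + 1), ∑ j ∈ Finset.range (n + 1), (j - i) +
          ∑ i ∈ Finset.range (n + 2), i := by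
      rw [Finset.sum_range_succ, hrow, add_zero, ← hlast, ← Finset.sum_add_distrib]
      simp only [Finset.sum_range_succ _ (n + 1)]
    rw [hsplit]
    lia

theorem IsTransversal.card_eq {ℓ : ℕ} {S : Finset (GL (Fin (n + 1)) F)} (hS : IsTransversal O ϖ S)
    (hϖ : IsUniformizer O ϖ) (hℓ : HasResidueCard O ϖ ℓ) :
    S.card = ℓ ^ (n * (n + 1) * (n + 2) / 6) := by
  obtain ⟨B, hB, hcard⟩ := hℓ.exists_isEntrySystem hϖ (n + 1)
  rw [hB.card_eq hϖ hS]
  simp only [hcard, Finset.prod_pow_eq_pow_sum]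
  rw [← six_mul_sum_sum_tsub, Nat.mul_div_cancel_left _ (by decide)]
  simp only [Finset.sum_range]

/-! ### Biequivariant functions -/

/-- `f` transforms by the inverse of the character `superdiagChar ψ a` under unipotent upper
triangular matrices on the left and under the conjugated Iwahori subgroup on the right. -/
structure IsBiequivariant (O : Subring F) (ϖ : F) (ψ : AddChar F R) (a : Fin n → O)
    (f : GL (Fin (n + 1)) F → R) : Prop where
  left : ∀ u g, u ∈ unitriangular F (n + 1) → superdiagChar ψ a u * f (u * g) = f g
  right : ∀ g j, InConjIwahori O ϖ j → superdiagChar ψ a j * f (g * j) = f g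

/-- The rows and the columns of `M` with index at least `q` are those of the identity matrix. -/
def IsOneFrom (q : ℕ) (M : Matrix (Fin m) (Fin m) F) : Prop :=
  ∀ i j : Fin m, q ≤ i ∨ q ≤ j → M i j = (1 : Matrix (Fin m) (Fin m) F) i j

theorem mul_colShear_single {g : GL (Fin m) F} {q : Fin m} (hg : IsOneFrom q g.1) {b : Fin m}
    (hb : b < q) (x : F) :
    g * colShear q (Pi.single b x) (fun i hi ↦ by rw [Pi.single_eq_of_ne (hb.trans_le hi).ne']) =
      colShear q (fun i ↦ g i b * x)
        (fun i hi ↦ by rw [hg i b (.inl hi), one_apply_ne (hb.trans_le hi).ne', zero_mul]) * g := by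
  refine Units.ext (Matrix.ext fun i j ↦ ?_)
  rw [mul_colShear_apply, colShear_mul_apply, mulVec_single, hg q j (.inl le_rfl), one_apply,
    Pi.single_apply, Pi.smul_apply, col_apply, op_smul_eq_mul]
  simp only [eq_comm]

theorem superdiagChar_colShear (a : Fin n → O) {p : Fin n} {x : Fin (n + 1) → F}
    {hx : ∀ i, p.succ ≤ i → x i = 0} :
    superdiagChar ψ a (colShear p.succ x hx) = ψ (a p * x p.castSucc) :=
  congrArg ψ (sum_mul_colShear_superdiag fun i ↦ (a i : F))

theorem superdiagChar_ne_zero [Nontrivial R] (a : Fin n → O) (g : GL (Fin (n + 1)) F) :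
    superdiagChar ψ a g ≠ 0 :=
  (ψ.val_isUnit _).ne_zero

theorem mul_inv_apply_of_row_eq {g κ : GL (Fin m) F} {i : Fin m} (h : ∀ j, g i j = κ i j)
    (j : Fin m) : (g * κ⁻¹) i j = (1 : Matrix (Fin m) (Fin m) F) i j := by
  rw [← Units.val_one, ← mul_inv_cancel κ, Units.val_mul, Units.val_mul, mul_apply, mul_apply]
  simp only [h]

theorem mul_inv_apply_of_col_eq_one {g κ : GL (Fin m) F} {j : Fin m}
    (h : ∀ i, κ i j = (1 : Matrix (Fin m) (Fin m) F) i j) (i : Fin m) :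
    (g * κ⁻¹) i j = g i j := by
  have hcol : (g * κ⁻¹ * κ) i j = (g * κ⁻¹) i j := by
    rw [Units.val_mul _ κ, mul_apply]
    simp only [h, ← mul_apply, mul_one]
  rw [← hcol, inv_mul_cancel_right]

theorem IsOneFrom.mul_inv_updateRow {g κ : GL (Fin m) F} {p : Fin m} (hg : IsOneFrom (p + 1) g.1)
    (hκ : κ.1 = (1 : Matrix (Fin m) (Fin m) F).updateRow p (g p)) :
    ∀ i j, p ≤ i ∨ p < j → (g * κ⁻¹) i j = (1 : Matrix (Fin m) (Fin m) F) i j := by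
  rintro i j (hi | hj)
  · refine mul_inv_apply_of_row_eq (fun l ↦ ?_) j
    rcases hi.eq_or_lt with rfl | hlt
    · rw [hκ, updateRow_self]
    · rw [hκ, updateRow_ne hlt.ne', hg _ _ (.inl hlt)]
  · rw [mul_inv_apply_of_col_eq_one (fun l ↦ ?_), hg _ _ (.inr hj)]
    rcases eq_or_ne l p with rfl | hl
    · rw [hκ, updateRow_self, hg _ _ (.inr hj)]
    · rw [hκ, updateRow_ne hl]

theorem exists_isOneFrom_unitriangular_mul {g : GL (Fin m) F} {p : Fin m}
    (hg : ∀ i j, p ≤ i ∨ p < j → g i j = (1 : Matrix (Fin m) (Fin m) F) i j) :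
    ∃ u ∈ unitriangular F m, IsOneFrom p (u * g).1 := by
  let x : Fin m → F := fun i ↦ if i < p then -g i p else 0
  refine ⟨colShear p x fun i hi ↦ if_neg hi.not_gt, colShear_mem_unitriangular, fun i j hij ↦ ?_⟩
  rw [colShear_mul_apply, hg p j (.inl le_rfl)]
  rcases le_or_gt p i with hi | hi
  · rw [hg i j (.inl hi), show x i = 0 from if_neg hi.not_gt, zero_mul, add_zero]
  rcases (show p ≤ j from hij.resolve_left hi.not_ge).eq_or_lt with rfl | hj
  · rw [show x i = -g i p from if_pos hi, one_apply_eq, mul_one, add_neg_cancel,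
      one_apply_ne hi.ne]
  · rw [hg i j (.inr hj), one_apply_ne hj.ne, mul_zero, add_zero]

theorem exists_inConjIwahori_of_isLowerTriangular (hϖ : IsUniformizer O ϖ)
    {M : Matrix (Fin m) (Fin m) F}
    (hM : ∀ i j, M i j - (1 : Matrix (Fin m) (Fin m) F) i j ∈ fracIdeal O ϖ (lev i j))
    (hlower : ∀ i j, i < j → M i j = 0) :
    ∃ κ : GL (Fin m) F, κ.1 = M ∧ InConjIwahori O ϖ κ ∧ κ ∈ integralGL O m := by
  have hdet : M.det ≠ 0 := by
    rw [det_of_isLowerTriangular M fun i j hij ↦ hlower i j hij]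
    refine Finset.prod_ne_zero_iff.2 fun i _ hi ↦
      hϖ.notMem_fracIdeal_one_of_sub_one_mem (x := M i i) ?_ (hi ▸ zero_mem _)
    simpa only [one_apply_eq, lev_of_le le_rfl, sub_self, zero_add] using hM i i
  exact ⟨.mkOfDetNeZero M hdet, rfl, hM,
    InConjIwahori.mem_integralGL_of_isLowerTriangular hϖ hM hlower⟩

namespace IsBiequivariant

variable [IsDomain R] {a : Fin n → Oˣ} {f : GL (Fin (n + 1)) F → R}

theorem superdiagChar_eq_of_mul_eq_mul {a : Fin n → O} (hf : IsBiequivariant O ϖ ψ a f)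
    {g u j : GL (Fin (n + 1)) F} (hfg : f g ≠ 0) (hu : u ∈ unitriangular F (n + 1))
    (hj : InConjIwahori O ϖ j) (h : g * j = u * g) : superdiagChar ψ a j = superdiagChar ψ a u := by
  have hright := hf.right g j hj
  rw [h] at hright
  refine mul_right_cancel₀ (fun hzero ↦ hfg ?_) (hright.trans (hf.left u g hu).symm)
  rw [← hright, hzero, mul_zero]

theorem sub_one_mem_of_ne_zero (hf : IsBiequivariant O ϖ ψ (fun i ↦ (a i : O)) f)
    (hϖ : IsUniformizer O ϖ) (hψ : IsUnramified O ϖ ψ) {g : GL (Fin (n + 1)) F} {p : Fin n}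
    (hg : IsOneFrom (p + 1) g.1) (hfg : f g ≠ 0) (j : Fin (n + 1)) :
    g p.castSucc j - (1 : Matrix (Fin (n + 1)) (Fin (n + 1)) F) p.castSucc j ∈
      fracIdeal O ϖ (lev p.castSucc j) := by
  rcases lt_or_ge p.castSucc j with hpj | hjp
  · rw [hg _ _ (.inr hpj), sub_self]
    exact zero_mem _
  have hj : j < p.succ := hjp.trans_lt Fin.castSucc_lt_succ
  have hchar (x : F) (hx : x ∈ fracIdeal O ϖ (-lev p.castSucc j)) :
      ψ (a p * (g p.castSucc j - (1 : Matrix _ _ F) p.castSucc j) * x) = 1 := by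
    have hshear := hf.superdiagChar_eq_of_mul_eq_mul hfg colShear_mem_unitriangular
      (inConjIwahori_colShear fun i _ ↦ ?_) (mul_colShear_single hg hj x)
    · rw [superdiagChar_colShear, superdiagChar_colShear] at hshear
      calc _ = ψ (a p * (g p.castSucc j * x) +
              -(a p * (Pi.single j x : Fin (n + 1) → F) p.castSucc)) := by
            rw [Pi.single_apply, one_apply]
            split_ifs <;> ring_nf
        _ = _ := by
            rw [ψ.map_add_eq_mul, ← hshear, ← ψ.map_add_eq_mul, add_neg_cancel, ψ.map_zero_eq_one]
    · rcases eq_or_ne i j with rfl | hij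
      · rw [Pi.single_eq_same]
        convert hx using 2
        rw [lev_of_le hjp, Fin.val_succ, Fin.val_castSucc]
        lia
      · rw [Pi.single_eq_of_ne hij]
        exact zero_mem _
  have hmem := mul_mem_fracIdeal_of_mem ((a p)⁻¹ : Oˣ).1.2
    (hψ.mem_fracIdeal_of_forall_map_eq_one hϖ hchar)
  rwa [← mul_assoc, ← O.coe_mul, Units.inv_mul, O.coe_one, one_mul] at hmem

theorem exists_eq_mul_of_isOneFrom_succ (hf : IsBiequivariant O ϖ ψ (fun i ↦ (a i : O)) f)
    (hϖ : IsUniformizer O ϖ) (hψ : IsUnramified O ϖ ψ) {g : GL (Fin (n + 1)) F} {p : Fin n}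
    (hg : IsOneFrom (p + 1) g.1) (hfg : f g ≠ 0) :
    ∃ u g' κ : GL (Fin (n + 1)) F, u ∈ unitriangular F (n + 1) ∧ IsOneFrom p g'.1 ∧
      κ ∈ integralGL O (n + 1) ∧ InConjIwahori O ϖ κ ∧ g = u * (g' * κ) := by
  have hκ (i j) : (1 : Matrix _ _ F).updateRow p.castSucc (g p.castSucc) i j -
      (1 : Matrix _ _ F) i j ∈ fracIdeal O ϖ (lev i j) := by
    rcases eq_or_ne i p.castSucc with rfl | hi
    · simpa only [updateRow_self] using hf.sub_one_mem_of_ne_zero hϖ hψ hg hfg j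
    · simp only [updateRow_ne hi, sub_self, zero_mem]
  have hlower (i j) (hij : i < j) :
      (1 : Matrix _ _ F).updateRow p.castSucc (g p.castSucc) i j = 0 := by
    rcases eq_or_ne i p.castSucc with rfl | hi
    · rw [updateRow_self, hg _ _ (.inr hij), one_apply_ne hij.ne]
    · rw [updateRow_ne hi, one_apply_ne hij.ne]
  obtain ⟨κ, hκeq, hκJ, hκK⟩ := exists_inConjIwahori_of_isLowerTriangular hϖ hκ hlower
  obtain ⟨u, hu, hu1⟩ := exists_isOneFrom_unitriangular_mul (hg.mul_inv_updateRow hκeq)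
  exact ⟨u⁻¹, u * (g * κ⁻¹), κ, inv_mem hu, hu1, hκK, hκJ, by group⟩

theorem exists_eq_unitriangular_mul (hf : IsBiequivariant O ϖ ψ (fun i ↦ (a i : O)) f)
    (hϖ : IsUniformizer O ϖ) (hψ : IsUnramified O ϖ ψ) {q : ℕ} (hq : q ≤ n)
    {g : GL (Fin (n + 1)) F} (hg : IsOneFrom q g.1) (hfg : f g ≠ 0) :
    ∃ u κ : GL (Fin (n + 1)) F, u ∈ unitriangular F (n + 1) ∧ κ ∈ integralGL O (n + 1) ∧
      InConjIwahori O ϖ κ ∧ g = u * κ := by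
  induction q generalizing g with
  | zero =>
    obtain rfl : g = 1 := Units.ext (Matrix.ext fun i j ↦ hg i j (.inl (Nat.zero_le _)))
    refine ⟨1, 1, one_mem _, one_mem _, fun i j ↦ ?_, (one_mul 1).symm⟩
    simp only [Units.val_one, sub_self, zero_mem]
  | succ p ih =>
    obtain ⟨u, g', κ, hu, hg', hκ, hκJ, rfl⟩ :=
      hf.exists_eq_mul_of_isOneFrom_succ hϖ hψ (p := ⟨p, hq⟩) hg hfg
    have hfg' : f g' ≠ 0 := by
      rw [← hf.right g' κ hκJ, ← hf.left u _ hu]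
      exact mul_ne_zero (superdiagChar_ne_zero _ _) (mul_ne_zero (superdiagChar_ne_zero _ _) hfg)
    obtain ⟨u', κ', hu', hκ', hκJ', rfl⟩ := ih (by lia) hg' hfg'
    exact ⟨u * u', κ' * κ, mul_mem hu hu', mul_mem hκ' hκ, hκJ'.mul hϖ hκJ, by group⟩

end IsBiequivariant

/-! ### Integral diagonal matrices -/

/-- The vector `d` with last entry `1` and consecutive quotients `dᵢ / dᵢ₊₁ = bᵢ`. -/
def tailProd {G : Type*} [CommGroup G] (b : Fin n → G) (i : Fin (n + 1)) : G :=
  Fin.partialProd b (Fin.last n) / Fin.partialProd b i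

section TailProd

variable {G : Type*} [CommGroup G]

theorem tailProd_last (b : Fin n → G) : tailProd b (Fin.last n) = 1 := div_self' _

theorem tailProd_castSucc (b : Fin n → G) (i : Fin n) :
    tailProd b i.castSucc = b i * tailProd b i.succ := by
  rw [tailProd, tailProd, Fin.partialProd_succ, div_mul_eq_div_div, mul_div_cancel]

theorem eq_tailProd_iff {b : Fin n → G} {c : Fin (n + 1) → G} :
    c = tailProd b ↔ c (Fin.last n) = 1 ∧ ∀ i : Fin n, c i.castSucc = b i * c i.succ := by
  constructor
  · rintro rfl
    exact ⟨tailProd_last b, tailProd_castSucc b⟩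
  · rintro ⟨hlast, hc⟩
    ext i
    induction i using Fin.reverseInduction with
    | last => rw [hlast, tailProd_last]
    | cast i ih => rw [hc, ih, tailProd_castSucc]

theorem map_tailProd {H : Type*} [CommGroup H] (φ : G →* H) (b : Fin n → G) (i : Fin (n + 1)) :
    φ (tailProd b i) = tailProd (fun j ↦ φ (b j)) i :=
  congrFun (eq_tailProd_iff (c := fun j ↦ φ (tailProd b j)).2
    ⟨by rw [tailProd_last, map_one], fun j ↦ by rw [tailProd_castSucc, map_mul]⟩) i

theorem existsUnique_tailProd_eq {c : Fin (n + 1) → G} (hc : c (Fin.last n) = 1) :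
    ∃! b : Fin n → G, c = tailProd b :=
  ⟨fun i ↦ c i.castSucc / c i.succ, eq_tailProd_iff.2 ⟨hc, fun i ↦ by rw [div_mul_cancel]⟩,
    fun b hb ↦ funext fun i ↦ by rw [(eq_tailProd_iff.1 hb).2, mul_div_cancel_right]⟩

end TailProd

/-- The diagonal matrix of `GL_m(F)` with entries the units `d i` of `O`. -/
def unitDiagonal : (Fin m → Oˣ) →* GL (Fin m) F :=
  (GeneralLinearGroup.map O.subtype).comp
    ((Units.map (diagonalRingHom (Fin m) O).toMonoidHom).comp MulEquiv.piUnits.symm.toMonoidHom)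

theorem unitDiagonal_mem_integralGL (d : Fin m → Oˣ) : unitDiagonal d ∈ integralGL O m :=
  ⟨_, rfl⟩

theorem val_unitDiagonal (d : Fin m → Oˣ) :
    (unitDiagonal d).1 = diagonal fun i ↦ ((d i : O) : F) := by
  exact diagonal_map (map_zero O.subtype)

theorem unitDiagonal_mul_apply (d : Fin m → Oˣ) (g : GL (Fin m) F) (i j : Fin m) :
    (unitDiagonal d * g) i j = (d i : O) * g i j := by
  rw [Units.val_mul, val_unitDiagonal, diagonal_mul]

theorem mul_unitDiagonal_apply (d : Fin m → Oˣ) (g : GL (Fin m) F) (i j : Fin m) :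
    (g * unitDiagonal d) i j = g i j * (d j : O) := by
  rw [Units.val_mul, val_unitDiagonal, mul_diagonal]

theorem conj_unitDiagonal_apply (d : Fin m → Oˣ) (g : GL (Fin m) F) (i j : Fin m) :
    (unitDiagonal d * g * (unitDiagonal d)⁻¹) i j = (d i : O) * g i j * ((d j)⁻¹ : Oˣ) := by
  rw [← map_inv, mul_unitDiagonal_apply, unitDiagonal_mul_apply, Pi.inv_apply]

theorem conj_unitDiagonal_mem_unitriangular (d : Fin m → Oˣ) {u : GL (Fin m) F}
    (hu : u ∈ unitriangular F m) :
    unitDiagonal d * u * (unitDiagonal d)⁻¹ ∈ unitriangular F m := by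
  refine ⟨fun i j hij ↦ ?_, fun i ↦ ?_⟩ <;> rw [conj_unitDiagonal_apply]
  · rw [hu.1 i j hij, mul_zero, zero_mul]
  · rw [hu.2 i, mul_one, coe_units_mul_coe_inv]

-- `D = diag(d)` with `dᵢ = -aᵢ dᵢ₊₁` satisfies `(D u D⁻¹)ᵢ,ᵢ₊₁ = -aᵢ uᵢ,ᵢ₊₁`.
theorem superdiagChar_mul_map_unitDiagonal_mul (a : Fin n → Oˣ) {f : GL (Fin (n + 1)) F → R}
    (hf : ∀ u g, u ∈ unitriangular F (n + 1) →
      f (u * g) = ψ (∑ i : Fin n, u i.castSucc i.succ) * f g) (u g : GL (Fin (n + 1)) F)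
    (hu : u ∈ unitriangular F (n + 1)) :
    superdiagChar ψ (fun i ↦ (a i : O)) u * f (unitDiagonal (tailProd (-a)) * (u * g)) =
      f (unitDiagonal (tailProd (-a)) * g) := by
  set D := unitDiagonal (tailProd (-a))
  have hsuper (i : Fin n) :
      (D * u * D⁻¹) i.castSucc i.succ = -((a i : O) * u i.castSucc i.succ) := by
    rw [conj_unitDiagonal_apply, tailProd_castSucc, Pi.neg_apply, neg_mul, Units.val_neg,
      O.coe_neg, Units.val_mul, O.coe_mul]
    linear_combination -((a i : O) * u i.castSucc i.succ) *
      coe_units_mul_coe_inv (tailProd (-a) i.succ)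
  calc _ = superdiagChar ψ (fun i ↦ (a i : O)) u * f (D * u * D⁻¹ * (D * g)) := by
        congr 2; group
    _ = _ := by
        rw [hf _ _ (conj_unitDiagonal_mem_unitriangular _ hu), ← mul_assoc, superdiagChar,
          ← ψ.map_add_eq_mul, Finset.sum_congr rfl fun i _ ↦ hsuper i, Finset.sum_neg_distrib,
          add_neg_cancel, ψ.map_zero_eq_one, one_mul]

/-! ### Twisted sums as biequivariant functions -/

section TwistedSum

variable {W : GL (Fin (n + 1)) F → R} {S : Finset (GL (Fin (n + 1)) F)} (a : Fin n → Oˣ)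

theorem isBiequivariant_twistedSum (hϖ : IsUniformizer O ϖ) (hψ : IsUnramified O ϖ ψ)
    (hW : IsSphericalWhittaker O ψ W) (hS : IsTransversal O ϖ S) :
    IsBiequivariant O ϖ ψ (fun i ↦ (a i : O)) fun g ↦
      twistedSum ψ W S (fun i ↦ (a i : O)) (unitDiagonal (tailProd (-a)) * g) where
  left := superdiagChar_mul_map_unitDiagonal_mul a fun _ g hu ↦
    twistedSum_unitriangular_mul _ hW hu g
  right g j hj := by
    rw [← mul_assoc]
    exact superdiagChar_mul_twistedSum_mul _ hϖ hψ hW hS hj _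

theorem twistedSum_unitDiagonal (hϖ : IsUniformizer O ϖ)
    (hW : IsSphericalWhittaker O ψ W) (hS : IsTransversal O ϖ S) :
    twistedSum ψ W S (fun i ↦ (a i : O)) (unitDiagonal (tailProd (-a))) = S.card * W 1 := by
  have hterm (η) (hη : η ∈ S) : superdiagChar ψ (fun i ↦ (a i : O)) η *
      W (unitDiagonal (tailProd (-a)) * η) = W 1 := by
    have h := superdiagChar_mul_map_unitDiagonal_mul a hW.map_unitriangular_mul η 1
      ((inConjN_iff hϖ).1 (hS.inConjN η hη)).1
    rw [mul_one, mul_one] at h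
    rw [h, ← one_mul (unitDiagonal _), hW.map_mul_integral _ _ (unitDiagonal_mem_integralGL _)]
  rw [twistedSum, Finset.sum_congr rfl hterm, Finset.sum_const, nsmul_eq_mul]

end TwistedSum

theorem inv_unitDiagonal_mul_apply (d : Fin m → Oˣ) (g : GL (Fin m) F) (i j : Fin m) :
    ((unitDiagonal d)⁻¹ * g) i j = ((d i)⁻¹ : Oˣ) * g i j := by
  rw [← map_inv, unitDiagonal_mul_apply, Pi.inv_apply]

theorem inv_unitDiagonal_mul_isOneFrom {d : Fin (n + 1) → Oˣ} (hd : d (Fin.last n) = 1)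
    {g : GL (Fin (n + 1)) F} (hg : IsOneFrom n g.1) :
    IsOneFrom n ((unitDiagonal d)⁻¹ * g).1 := by
  have heq_last {i : Fin (n + 1)} (hi : n ≤ i) : i = Fin.last n := Fin.last_le_iff.1 hi
  intro i j hij
  rw [inv_unitDiagonal_mul_apply, hg i j hij]
  rcases eq_or_ne i j with rfl | hne
  · rw [heq_last (hij.elim id id), hd, inv_one, Units.val_one, O.coe_one, one_mul]
  · rw [one_apply_ne hne, mul_zero]

theorem inConjIwahori_inv_unitDiagonal_mul_iff (hϖ : IsUniformizer O ϖ) (d : Fin m → Oˣ)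
    {g : GL (Fin m) F} (hg : g ∈ integralGL O m) :
    InConjIwahori O ϖ ((unitDiagonal d)⁻¹ * g) ↔
      (∀ i j : Fin m, j < i → g i j ∈ fracIdeal O ϖ (i - j + 1)) ∧
        ∀ i, g i i - (d i : O) ∈ fracIdeal O ϖ 1 := by
  have hunit (u : Oˣ) {k : ℤ} {x : F} :
      ((u⁻¹ : Oˣ) : O) * x ∈ fracIdeal O ϖ k ↔ x ∈ fracIdeal O ϖ k := by
    refine ⟨fun h ↦ ?_, mul_mem_fracIdeal_of_mem (SetLike.coe_mem _)⟩
    simpa only [← mul_assoc, coe_units_mul_coe_inv, one_mul] using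
      mul_mem_fracIdeal_of_mem (SetLike.coe_mem (u : O)) h
  have hdiag (i) : ((unitDiagonal d)⁻¹ * g) i i - (1 : Matrix (Fin m) (Fin m) F) i i ∈
      fracIdeal O ϖ (lev i i) ↔ g i i - (d i : O) ∈ fracIdeal O ϖ 1 := by
    rw [inv_unitDiagonal_mul_apply, one_apply_eq, lev_of_le le_rfl, sub_self, zero_add,
      ← hunit (d i) (x := g i i - _), mul_sub, mul_comm _ ((d i : O) : F), coe_units_mul_coe_inv]
  have hoff {i j} (hij : i ≠ j) :
      ((unitDiagonal d)⁻¹ * g) i j - (1 : Matrix (Fin m) (Fin m) F) i j ∈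
        fracIdeal O ϖ (lev i j) ↔ g i j ∈ fracIdeal O ϖ (lev i j) := by
    rw [inv_unitDiagonal_mul_apply, one_apply_ne hij, sub_zero, hunit]
  constructor
  · exact fun h ↦ ⟨fun i j hji ↦ lev_of_le hji.le ▸ (hoff hji.ne').1 (h i j),
      fun i ↦ (hdiag i).1 (h i i)⟩
  · rintro ⟨hlower, hd⟩ i j
    rcases lt_trichotomy i j with hij | rfl | hji
    · refine (hoff hij.ne).2 (hϖ.fracIdeal_antitone ?_
        (mem_fracIdeal_zero.2 (apply_mem_of_mem_integralGL hg i j)))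
      rw [lev_of_lt hij]
      exact sub_nonpos.2 (by exact_mod_cast hij.le)
    · exact (hdiag i).2 (hd i)
    · exact (hoff hji.ne').2 (lev_of_le hji.le ▸ hlower i j hji)

theorem IsBiequivariant.eq_ite_of_mem_integralGL [IsDomain R] {a : Fin n → Oˣ}
    {f : GL (Fin (n + 1)) F → R} (hf : IsBiequivariant O ϖ ψ (fun i ↦ (a i : O)) f)
    (hϖ : IsUniformizer O ϖ) (hψ : IsUnramified O ϖ ψ) {g : GL (Fin (n + 1)) F}
    (hg : IsOneFrom n g.1) (hgK : g ∈ integralGL O (n + 1)) [Decidable (InConjIwahori O ϖ g)] :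
    f g = if InConjIwahori O ϖ g then f 1 else 0 := by
  split_ifs with hgJ
  · rw [← hf.right 1 g hgJ, superdiagChar_of_mem_integralGL hψ _ hgK, one_mul, one_mul]
  · by_contra hfg
    obtain ⟨u, κ, hu, hκ, hκJ, rfl⟩ := hf.exists_eq_unitriangular_mul hϖ hψ le_rfl hg hfg
    have huK : u ∈ integralGL O (n + 1) := (Subgroup.mul_mem_cancel_right _ hκ).1 hgK
    exact hgJ ((inConjIwahori_of_inNO hϖ (inNO_iff.2 ⟨hu, huK⟩)).mul hϖ hκJ)

section TwistedSum

variable [IsDomain R] {W : GL (Fin (n + 1)) F → R} {S : Finset (GL (Fin (n + 1)) F)}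
  (a : Fin n → Oˣ) {g : GL (Fin (n + 1)) F}

theorem exists_eq_unitriangular_mul_of_twistedSum_ne_zero (hϖ : IsUniformizer O ϖ)
    (hψ : IsUnramified O ϖ ψ) (hW : IsSphericalWhittaker O ψ W) (hS : IsTransversal O ϖ S)
    (hg : IsOneFrom n g.1) (hne : twistedSum ψ W S (fun i ↦ (a i : O)) g ≠ 0) :
    ∃ u ∈ unitriangular F (n + 1), ∃ k ∈ integralGL O (n + 1), g = u * k := by
  obtain ⟨u, κ, hu, hκ, -, heq⟩ :=
    (isBiequivariant_twistedSum a hϖ hψ hW hS).exists_eq_unitriangular_mul hϖ hψ le_rfl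
      (inv_unitDiagonal_mul_isOneFrom (tailProd_last (-a)) hg)
      (by simpa only [mul_inv_cancel_left] using hne)
  refine ⟨_, conj_unitDiagonal_mem_unitriangular (tailProd (-a)) hu, _,
    mul_mem (unitDiagonal_mem_integralGL (tailProd (-a))) hκ, ?_⟩
  rw [eq_mul_of_inv_mul_eq heq]
  group

theorem twistedSum_eq_ite (hϖ : IsUniformizer O ϖ) (hψ : IsUnramified O ϖ ψ)
    (hW : IsSphericalWhittaker O ψ W) (hS : IsTransversal O ϖ S) (hg : IsOneFrom n g.1)
    (hgK : g ∈ integralGL O (n + 1))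
    [Decidable (InConjIwahori O ϖ ((unitDiagonal (tailProd (-a)))⁻¹ * g))] :
    twistedSum ψ W S (fun i ↦ (a i : O)) g =
      if InConjIwahori O ϖ ((unitDiagonal (tailProd (-a)))⁻¹ * g) then S.card * W 1 else 0 := by
  have h := (isBiequivariant_twistedSum a hϖ hψ hW hS).eq_ite_of_mem_integralGL hϖ hψ
    (inv_unitDiagonal_mul_isOneFrom (tailProd_last (-a)) hg)
    (mul_mem (inv_mem (unitDiagonal_mem_integralGL _)) hgK)
  rwa [mul_inv_cancel_left, mul_one, twistedSum_unitDiagonal a hϖ hW hS] at h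

end TwistedSum

section ResidueField

open IsLocalRing

variable [IsLocalRing O]

theorem residue_apply_self_ne_zero (hϖ : IsUniformizer O ϖ) {g : GL (Fin m) O}
    (hg : ∀ i j, j < i → (g i j : F) ∈ fracIdeal O ϖ 1) (i : Fin m) : residue O (g i i) ≠ 0 := by
  have hdet : IsUnit ((GeneralLinearGroup.map (residue O) g).1).det :=
    (isUnit_iff_isUnit_det _).1 (Units.isUnit _)
  have htri : (GeneralLinearGroup.map (residue O) g).1.IsUpperTriangular :=
    fun i j hij ↦ hϖ.residue_eq_zero_iff.2 (hg i j hij)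
  rw [det_of_isUpperTriangular htri] at hdet
  exact Finset.prod_ne_zero_iff.1 hdet.ne_zero i (Finset.mem_univ i)

theorem existsUnique_sub_tailProd_mem (hϖ : IsUniformizer O ϖ) {g : GL (Fin (n + 1)) F}
    (hg : g ∈ integralGL O (n + 1)) (hlast : g (Fin.last n) (Fin.last n) = 1)
    (hlower : ∀ i j, j < i → g i j ∈ fracIdeal O ϖ 1) :
    ∃! a : Fin n → (ResidueField O)ˣ,
      ∀ i, g i i - (tailProd (-fun j ↦ unitLift (a j)) i : Oˣ).1 ∈ fracIdeal O ϖ 1 := by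
  obtain ⟨g₀, rfl⟩ := hg
  let c (i : Fin (n + 1)) : (ResidueField O)ˣ :=
    Units.mk0 (residue O (g₀ i i)) (residue_apply_self_ne_zero hϖ hlower i)
  have hc : c (Fin.last n) = 1 := Units.ext (by
    rw [Units.val_mk0, Subtype.ext (a1 := g₀ _ _) (a2 := 1) hlast, map_one, Units.val_one])
  have hiff (a : Fin n → (ResidueField O)ˣ) :
      (∀ i, (g₀ i i : F) - (tailProd (-fun j ↦ unitLift (a j)) i : Oˣ).1 ∈ fracIdeal O ϖ 1) ↔
        c = tailProd (-a) := by
    have hmap : tailProd (-a) = fun i ↦ Units.map (residue O).toMonoidHom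
        (tailProd (-fun j ↦ unitLift (a j)) i) := by
      ext1 i
      rw [map_tailProd]
      congr 1
      ext j
      exact (residue_unitLift (a j) ▸ map_neg (residue O) (unitLift (a j) : O)).symm
    rw [hmap, funext_iff]
    refine forall_congr' fun i ↦ ?_
    rw [← hϖ.residue_eq_iff, Units.ext_iff]
    rfl
  exact ((Equiv.neg _).existsUnique_congr hiff).2 (existsUnique_tailProd_eq hc)

end ResidueField

/-! ### The block embedding -/

/-- The embedding `ι : GL_n ↪ GL_{n+1}` as the top left block. -/
def blockEmbedding (A : Type*) [CommRing A] (n : ℕ) : GL (Fin n) A →* GL (Fin (n + 1)) A :=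
  Units.map
    { toFun M := reindex finSumFinEquiv finSumFinEquiv (fromBlocks M 0 0 1)
      map_one' := by rw [fromBlocks_one, reindex_apply, submatrix_one_equiv]
      map_mul' M N := by
        rw [reindex_apply, reindex_apply, reindex_apply, submatrix_mul_equiv, fromBlocks_multiply]
        simp only [Matrix.mul_zero, Matrix.zero_mul, add_zero, zero_add, Matrix.mul_one] }

section BlockEmbedding

variable {A : Type*} [CommRing A] (h : GL (Fin n) A)

theorem blockEmbedding_apply (i j : Fin (n + 1)) :
    blockEmbedding A n h i j =
      fromBlocks h.1 0 0 1 (finSumFinEquiv.symm i) (finSumFinEquiv.symm j) :=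
  rfl

theorem finSumFinEquiv_symm_castSucc (i : Fin n) :
    finSumFinEquiv.symm i.castSucc = (.inl i : Fin n ⊕ Fin 1) :=
  finSumFinEquiv_symm_apply_castAdd i

theorem blockEmbedding_castSucc_castSucc (i j : Fin n) :
    blockEmbedding A n h i.castSucc j.castSucc = h i j := by
  rw [blockEmbedding_apply, finSumFinEquiv_symm_castSucc, finSumFinEquiv_symm_castSucc,
    fromBlocks_apply₁₁]

theorem blockEmbedding_castSucc_last (i : Fin n) :
    blockEmbedding A n h i.castSucc (Fin.last n) = 0 := by
  rw [blockEmbedding_apply, finSumFinEquiv_symm_castSucc, finSumFinEquiv_symm_last,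
    fromBlocks_apply₁₂, Matrix.zero_apply]

theorem blockEmbedding_last_castSucc (j : Fin n) :
    blockEmbedding A n h (Fin.last n) j.castSucc = 0 := by
  rw [blockEmbedding_apply, finSumFinEquiv_symm_castSucc, finSumFinEquiv_symm_last,
    fromBlocks_apply₂₁, Matrix.zero_apply]

theorem blockEmbedding_last_last : blockEmbedding A n h (Fin.last n) (Fin.last n) = 1 := by
  rw [blockEmbedding_apply, finSumFinEquiv_symm_last, fromBlocks_apply₂₂, one_apply_eq]

theorem det_blockEmbedding : (blockEmbedding A n h).1.det = h.1.det := by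
  change (reindex _ _ (fromBlocks h.1 0 0 (1 : Matrix (Fin 1) (Fin 1) A))).det = _
  rw [det_reindex_self, det_fromBlocks_zero₂₁, det_one, mul_one]

theorem map_blockEmbedding {B : Type*} [CommRing B] (φ : A →+* B) :
    GeneralLinearGroup.map φ (blockEmbedding A n h) =
      blockEmbedding B n (GeneralLinearGroup.map φ h) := by
  ext i j
  rw [GeneralLinearGroup.map_apply]
  induction i using Fin.lastCases <;> induction j using Fin.lastCases <;>
    simp only [blockEmbedding_castSucc_castSucc, blockEmbedding_castSucc_last,
      blockEmbedding_last_castSucc, blockEmbedding_last_last, map_zero, map_one,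
      GeneralLinearGroup.map_apply]

end BlockEmbedding

theorem isOneFrom_blockEmbedding (h : GL (Fin n) F) : IsOneFrom n (blockEmbedding F n h).1 := by
  intro i j hij
  induction i using Fin.lastCases with
  | last =>
    induction j using Fin.lastCases with
    | last => rw [blockEmbedding_last_last, one_apply_eq]
    | cast j => rw [blockEmbedding_last_castSucc, one_apply_ne j.castSucc_lt_last.ne']
  | cast i =>
    obtain rfl : j = Fin.last n := Fin.last_le_iff.1 (hij.resolve_left (by simp))
    rw [blockEmbedding_castSucc_last, one_apply_ne i.castSucc_lt_last.ne]

theorem blockEmbedding_mem_integralGL {h : GL (Fin n) F} (hh : h ∈ integralGL O n) :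
    blockEmbedding F n h ∈ integralGL O (n + 1) := by
  obtain ⟨h₀, rfl⟩ := hh
  exact ⟨_, map_blockEmbedding h₀ _⟩

theorem blockEmbedding_mem_fracIdeal_iff {h : GL (Fin n) F} :
    (∀ i j : Fin (n + 1), j < i → blockEmbedding F n h i j ∈ fracIdeal O ϖ (i - j + 1)) ↔
      ∀ i j : Fin n, j < i → h i j ∈ fracIdeal O ϖ (i - j + 1) := by
  constructor
  · intro hlower i j hji
    simpa only [blockEmbedding_castSucc_castSucc, Fin.val_castSucc] using
      hlower i.castSucc j.castSucc (Fin.castSucc_lt_castSucc_iff.2 hji)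
  · intro hlower i j hji
    obtain ⟨j, rfl⟩ := Fin.exists_castSucc_eq.2 (hji.trans_le i.le_last).ne
    induction i using Fin.lastCases with
    | last => exact blockEmbedding_last_castSucc h j ▸ zero_mem _
    | cast i =>
      rw [blockEmbedding_castSucc_castSucc]
      exact hlower i j (Fin.castSucc_lt_castSucc_iff.1 hji)

theorem exists_eq_unitriangular_mul_of_blockEmbedding_eq {h : GL (Fin n) F}
    {u κ : GL (Fin (n + 1)) F} (hu : u ∈ unitriangular F (n + 1)) (hκ : κ ∈ integralGL O (n + 1))
    (heq : blockEmbedding F n h = u * κ) :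
    ∃ v ∈ unitriangular F n, ∃ k ∈ integralGL O n, h = v * k := by
  obtain ⟨hlower, hdiag⟩ := inv_mem hu
  obtain ⟨v, hv, hv_eq⟩ := exists_mem_unitriangular_eq
    (M := (u⁻¹).1.submatrix Fin.castSucc Fin.castSucc)
    (fun i j hij ↦ hlower _ _ (Fin.castSucc_lt_castSucc_iff.2 hij)) fun i ↦ hdiag _
  have hκ_eq : u⁻¹ * blockEmbedding F n h = κ := inv_mul_eq_of_eq_mul heq
  have hblock (i j : Fin n) : (v * h) i j = κ i.castSucc j.castSucc := by
    rw [← hκ_eq, Units.val_mul, Units.val_mul, hv_eq, mul_apply, mul_apply, Fin.sum_univ_castSucc,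
      blockEmbedding_last_castSucc, mul_zero, add_zero]
    simp only [blockEmbedding_castSucc_castSucc, submatrix_apply]
  have hdet : (v * h).1.det = κ.1.det := by
    rw [← hκ_eq, Units.val_mul, Units.val_mul, det_mul, det_mul, det_blockEmbedding,
      det_eq_one_of_mem_unitriangular hv, det_eq_one_of_mem_unitriangular (inv_mem hu)]
  have hvh : v * h ∈ integralGL O n :=
    mem_integralGL_of_inv_det_mem (fun i j ↦ hblock i j ▸ apply_mem_of_mem_integralGL hκ _ _)
      (hdet ▸ inv_det_mem_of_inv_apply_mem (apply_mem_of_mem_integralGL (inv_mem hκ)))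
  exact ⟨v⁻¹, inv_mem hv, v * h, hvh, (inv_mul_cancel_left v h).symm⟩

/-! ### Support and values of the weighted sum -/

section WeightedSum

variable [IsDomain R] {ℓ : ℕ} {W : GL (Fin (n + 1)) F → R} {S : Finset (GL (Fin (n + 1)) F)}

open IsLocalRing in
theorem sum_twistedSum_unitLift_eq_ite [IsLocalRing O] [Fintype (ResidueField O)]
    [DecidableEq (ResidueField O)] (hϖ : IsUniformizer O ϖ) (hψ : IsUnramified O ϖ ψ)
    (hW : IsSphericalWhittaker O ψ W) (hS : IsTransversal O ϖ S) {g : GL (Fin (n + 1)) F}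
    (hg : IsOneFrom n g.1) (hgK : g ∈ integralGL O (n + 1))
    [Decidable (∀ i j : Fin (n + 1), j < i → g i j ∈ fracIdeal O ϖ (i - j + 1))] :
    ∑ a : Fin n → (ResidueField O)ˣ, twistedSum ψ W S (fun i ↦ (unitLift (a i) : O)) g =
      if ∀ i j : Fin (n + 1), j < i → g i j ∈ fracIdeal O ϖ (i - j + 1) then S.card * W 1
      else 0 := by
  classical
  simp only [twistedSum_eq_ite _ hϖ hψ hW hS hg hgK,
    inConjIwahori_inv_unitDiagonal_mul_iff hϖ _ hgK]
  split_ifs with hlower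
  · have hlower₁ (i j : Fin (n + 1)) (hji : j < i) : g i j ∈ fracIdeal O ϖ 1 :=
      hϖ.fracIdeal_antitone (by have : (j : ℕ) < i := hji; omega) (hlower i j hji)
    have hlast : g (Fin.last n) (Fin.last n) = 1 := by
      rw [hg _ _ (.inl le_rfl), one_apply_eq]
    obtain ⟨a, ha, huniq⟩ := existsUnique_sub_tailProd_mem hϖ hgK hlast hlower₁
    rw [Finset.sum_eq_single_of_mem a (Finset.mem_univ a) fun b _ hb ↦
      if_neg fun h ↦ hb (huniq b h.2), if_pos ⟨hlower, ha⟩]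
  · exact Finset.sum_eq_zero fun a _ ↦ if_neg fun h ↦ hlower h.1

theorem sum_pow_sInt_mul_blockEmbedding_eq_zero (hϖ : IsUniformizer O ϖ)
    (hℓ : HasResidueCard O ϖ ℓ) (hψ : IsUnramified O ϖ ψ) (hW : IsSphericalWhittaker O ψ W)
    (hS : IsTransversal O ϖ S) {h : GL (Fin n) F}
    (hh : ¬ ∃ u ∈ unitriangular F n, ∃ k ∈ integralGL O n, h = u * k) :
    ∑ η ∈ S, (1 - (ℓ : R)) ^ sInt O η * W (blockEmbedding F n h * η) = 0 := by
  classical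
  have := hϖ.isLocalRing
  have := hℓ.fintypeResidueField hϖ
  rw [sum_pow_sInt_mul_eq hϖ hℓ hψ hS, Finset.sum_eq_zero, mul_zero]
  by_contra! ⟨a, -, ha⟩
  obtain ⟨u, hu, k, hk, heq⟩ := exists_eq_unitriangular_mul_of_twistedSum_ne_zero
    (fun i ↦ unitLift (a i)) hϖ hψ hW hS (isOneFrom_blockEmbedding h) ha
  exact hh (exists_eq_unitriangular_mul_of_blockEmbedding_eq hu hk heq)

theorem sum_pow_sInt_mul_blockEmbedding_eq_ite (hϖ : IsUniformizer O ϖ)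
    (hℓ : HasResidueCard O ϖ ℓ) (hψ : IsUnramified O ϖ ψ) (hW : IsSphericalWhittaker O ψ W)
    (hS : IsTransversal O ϖ S) {k : GL (Fin n) F} (hk : k ∈ integralGL O n)
    [Decidable (∀ i j : Fin n, j < i → k i j ∈ fracIdeal O ϖ (i - j + 1))] :
    ∑ η ∈ S, (1 - (ℓ : R)) ^ sInt O η * W (blockEmbedding F n k * η) =
      if ∀ i j : Fin n, j < i → k i j ∈ fracIdeal O ϖ (i - j + 1)
        then (-1) ^ n * (ℓ : R) ^ (n * (n + 1) * (n + 2) / 6) * W 1 else 0 := by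
  classical
  have := hϖ.isLocalRing
  have := hℓ.fintypeResidueField hϖ
  rw [sum_pow_sInt_mul_eq hϖ hℓ hψ hS, sum_twistedSum_unitLift_eq_ite hϖ hψ hW hS
    (isOneFrom_blockEmbedding k) (blockEmbedding_mem_integralGL hk), mul_ite, mul_zero, ← mul_assoc,
    hS.card_eq hϖ hℓ, Nat.cast_pow]
  simp only [blockEmbedding_mem_fracIdeal_iff]

end WeightedSum

theorem stmt_12_general [IsDomain R] {ℓ : ℕ} {W : GL (Fin (n + 1)) F → R}
    {S : Finset (GL (Fin (n + 1)) F)} (hϖ : IsUniformizer O ϖ) (hℓ : HasResidueCard O ϖ ℓ)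
    (hψ : IsUnramified O ϖ ψ) (hW : IsSphericalWhittaker O ψ W) (hS : IsTransversal O ϖ S) :
    (∀ (h : GL (Fin n) F) (h' : GL (Fin (n + 1)) F),
      h'.1 = reindex finSumFinEquiv finSumFinEquiv (fromBlocks h.1 0 0 1) →
      (¬ ∃ u k : GL (Fin n) F,
        ((∀ i j, j < i → u i j = 0) ∧ ∀ i, u i i = 1) ∧ InGLO O k ∧ h = u * k) →
      ∑ η ∈ S, (1 - (ℓ : R)) ^ sInt O η * W (h' * η) = 0) ∧
    (∀ (k : GL (Fin n) F) (h' : GL (Fin (n + 1)) F),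
      h'.1 = reindex finSumFinEquiv finSumFinEquiv (fromBlocks k.1 0 0 1) → InGLO O k →
      ((∀ i j : Fin n, j < i → ∃ d ∈ O, k i j = ϖ ^ ((i : ℕ) - (j : ℕ) + 1) * d) →
        ∑ η ∈ S, (1 - (ℓ : R)) ^ sInt O η * W (h' * η) =
          (-1) ^ n * (ℓ : R) ^ (n * (n + 1) * (n + 2) / 6) * W 1) ∧
      ((¬ ∀ i j : Fin n, j < i → ∃ d ∈ O, k i j = ϖ ^ ((i : ℕ) - (j : ℕ) + 1) * d) →
        ∑ η ∈ S, (1 - (ℓ : R)) ^ sInt O η * W (h' * η) = 0)) := by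
  classical
  refine ⟨fun h h' hh' hh ↦ ?_, fun k h' hh' hk ↦ ?_⟩ <;>
    obtain rfl : h' = blockEmbedding F n _ := Units.ext hh'
  · refine sum_pow_sInt_mul_blockEmbedding_eq_zero hϖ hℓ hψ hW hS fun ⟨u, hu, k, hk, heq⟩ ↦ ?_
    exact hh ⟨u, k, hu, mem_integralGL_iff.1 hk, heq⟩
  · have hdepth : (∀ i j : Fin n, j < i → ∃ d ∈ O, k i j = ϖ ^ ((i : ℕ) - (j : ℕ) + 1) * d) ↔
        ∀ i j : Fin n, j < i → k i j ∈ fracIdeal O ϖ (i - j + 1) := by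
      refine forall₃_congr fun i j hji ↦ ?_
      rw [← mem_fracIdeal_natCast, Nat.cast_add_one, Nat.cast_sub hji.le]
    rw [sum_pow_sInt_mul_blockEmbedding_eq_ite hϖ hℓ hψ hW hS (mem_integralGL_iff.2 hk), hdepth]
    exact ⟨fun h ↦ if_pos h, fun h ↦ if_neg h⟩

/-- local Birch lemma: let `W_{n+1}` be a spherical Whittaker function on
`GL_{n+1}(F)` for `ψ`, and set
`W̃(h) = Σ_{η ∈ 𝒩_{n+1}} (1-ℓ)^{s(η)} W_{n+1}(ι(h)η)`.
Then `W̃` is supported on `N_n(F)·GL_n(O)`, and for `k ∈ GL_n(O)`: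
`W̃(k) = (-1)ⁿ ℓ^{n(n+1)(n+2)/6} W_{n+1}(1)` if `v(k_{ij}) > i-j` for all `i > j`, else `0`.
The coset space `𝒩_{n+1} = φ⁻¹N_{n+1}(O)φ/N_{n+1}(O)` is realized by a set `S` of coset
representatives. -/
theorem stmt_12 (O : Subring F) (ϖ : F) (ℓ : ℕ)
    (hϖO : ϖ ∈ O) (hϖ0 : ϖ ≠ 0)
    (hval : ∀ x : F, x ≠ 0 → ∃ (k : ℤ) (w : F), w ∈ O ∧ w⁻¹ ∈ O ∧ x = ϖ ^ k * w)
    (hres : ∀ k : ℕ, ∃ T : Finset F, (↑T : Set F) ⊆ (O : Set F) ∧ T.card = ℓ ^ k ∧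
      ∀ y ∈ O, ∃! r, r ∈ T ∧ ∃ d ∈ O, y - r = ϖ ^ k * d)
    (ψ : F → ℂ) (hψadd : ∀ x y : F, ψ (x + y) = ψ x * ψ y)
    (hψO : ∀ x ∈ O, ψ x = 1)
    (hψnt : ∃ y : F, ϖ * y ∈ O ∧ ψ y ≠ 1)
    (n : ℕ)
    (W : GL (Fin (n + 1)) F → ℂ)
    -- `W(ug) = ψ(u) W(g)` for upper-triangular unipotent `u`
    (hWleft : ∀ u g : GL (Fin (n + 1)) F,
      ((∀ i j, j < i → (u : Matrix (Fin (n + 1)) (Fin (n + 1)) F) i j = 0) ∧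
        (∀ i, (u : Matrix (Fin (n + 1)) (Fin (n + 1)) F) i i = 1)) →
      W (u * g)
        = ψ (∑ i : Fin n, (u : Matrix (Fin (n + 1)) (Fin (n + 1)) F) i.castSucc i.succ)
          * W g)
    -- `W` is right `GL_{n+1}(O)`-invariant (spherical)
    (hWright : ∀ g k : GL (Fin (n + 1)) F, InGLO O k → W (g * k) = W g)
    -- `S`: a set of representatives of `𝒩_{n+1}`
    (S : Finset (GL (Fin (n + 1)) F))
    (hSmem : ∀ η ∈ S, InConjN O ϖ η)
    (hSrep : ∀ η : GL (Fin (n + 1)) F, InConjN O ϖ η →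
      ∃! ρ, ρ ∈ S ∧ ∃ ν : GL (Fin (n + 1)) F, InNO O ν ∧ η = ρ * ν) :
    -- support of `W̃` on `N_n(F)·GL_n(O)`
    (∀ (h : GL (Fin n) F) (h' : GL (Fin (n + 1)) F),
      (h' : Matrix (Fin (n + 1)) (Fin (n + 1)) F)
        = Matrix.reindex finSumFinEquiv finSumFinEquiv
            (Matrix.fromBlocks (h : Matrix (Fin n) (Fin n) F) 0 0 1) →
      (¬ ∃ u k : GL (Fin n) F,
        ((∀ i j, j < i → (u : Matrix (Fin n) (Fin n) F) i j = 0) ∧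
          (∀ i, (u : Matrix (Fin n) (Fin n) F) i i = 1)) ∧
        InGLO O k ∧ h = u * k) →
      (∑ η ∈ S, (1 - (ℓ : ℂ)) ^ (sInt O η) * W (h' * η)) = 0) ∧
    -- value of `W̃` on `GL_n(O)`
    (∀ (k : GL (Fin n) F) (h' : GL (Fin (n + 1)) F),
      (h' : Matrix (Fin (n + 1)) (Fin (n + 1)) F)
        = Matrix.reindex finSumFinEquiv finSumFinEquiv
            (Matrix.fromBlocks (k : Matrix (Fin n) (Fin n) F) 0 0 1) →
      InGLO O k →
      ((∀ i j : Fin n, j < i →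
          ∃ d ∈ O, (k : Matrix (Fin n) (Fin n) F) i j = ϖ ^ ((i : ℕ) - (j : ℕ) + 1) * d) →
        (∑ η ∈ S, (1 - (ℓ : ℂ)) ^ (sInt O η) * W (h' * η))
          = (-1) ^ n * (ℓ : ℂ) ^ (n * (n + 1) * (n + 2) / 6) * W 1) ∧
      ((¬ ∀ i j : Fin n, j < i →
          ∃ d ∈ O, (k : Matrix (Fin n) (Fin n) F) i j = ϖ ^ ((i : ℕ) - (j : ℕ) + 1) * d) →
        (∑ η ∈ S, (1 - (ℓ : ℂ)) ^ (sInt O η) * W (h' * η)) = 0)) := by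
  have hψ : IsUnramified O ϖ (⟨ψ, hψO 0 O.zero_mem, hψadd⟩ : AddChar F ℂ) := ⟨hψO, hψnt⟩
  exact stmt_12_general ⟨hϖO, hψ.inv_notMem hϖ0, hval⟩ hres hψ
    ⟨hWleft, fun g k hk ↦ hWright g k (mem_integralGL_iff.1 hk)⟩ ⟨hSmem, hSrep⟩

end Stmt12
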